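/- Let α ∈ (0,π), γ ∈ (0,π/2], and B = (sin γ·cos(α/2), sin γ·sin(α/2), cos γ). Then lim_{τ→+∞} s(B;α,τ) = σ(arcsin(sin α·sin γ)). -/

import Mathlib

open Real MeasureTheory Set Filter

noncomputable section

namespace MagWedge

/-- The infinite sector `S_α := {(x₁,x₂) : |x₂| ≤ x₁·tan(α/2)}`. -/
def sector (α : ℝ) : Set (ℝ × ℝ) :=
  {x | |x.2| ≤ x.1 * Real.tan (α / 2)}

/-- The infinite wedge `W_α := S_α × ℝ` (coordinates `(x₁, x₂, x₃)`). -/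
def wedge (α : ℝ) : Set (ℝ × ℝ × ℝ) :=
  {x | |x.2.1| ≤ x.1 * Real.tan (α / 2)}

/-- The upper half-plane `Hp^up := {x₂ < x₁·tan(α/2)}`. -/
def hpUp (α : ℝ) : Set (ℝ × ℝ) :=
  {x | x.2 < x.1 * Real.tan (α / 2)}

/-- The lower half-plane `Hp^low := {x₂ > −x₁·tan(α/2)}`. -/
def hpLow (α : ℝ) : Set (ℝ × ℝ) :=
  {x | -(x.1 * Real.tan (α / 2)) < x.2}

/-- The magnetic/electric energy of `u` on a planar domain `Ω`, for magnetic field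
`(b₁,b₂,b₃)` (gauge `A̲ = (−x₂ b₃, 0)`) and Fourier parameter `τ`. -/
def energy2D (Ω : Set (ℝ × ℝ)) (b1 b2 b3 τ : ℝ) (u : ℝ × ℝ → ℂ) : ℝ :=
  ∫ x in Ω,
    ‖(-Complex.I) * fderiv ℝ u x (1, 0) + ((x.2 * b3 : ℝ) : ℂ) * u x‖ ^ 2
      + ‖fderiv ℝ u x (0, 1)‖ ^ 2
      + (x.1 * b2 - x.2 * b1 - τ) ^ 2 * ‖u x‖ ^ 2

/-- The squared `L²`-norm of `u` on a planar domain `Ω`. -/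
def norm2D (Ω : Set (ℝ × ℝ)) (u : ℝ × ℝ → ℂ) : ℝ := ∫ x in Ω, ‖u x‖ ^ 2

/-- The bottom of the spectrum of the Neumann realization of
`(−i∇−A̲)² + (x₁b₂−x₂b₁−τ)²` on `Ω`, via the Rayleigh quotient. -/
def specInf2D (Ω : Set (ℝ × ℝ)) (b1 b2 b3 τ : ℝ) : ℝ :=
  sInf { r : ℝ | ∃ u : ℝ × ℝ → ℂ, ContDiff ℝ (⊤ : ℕ∞) u ∧ HasCompactSupport u ∧
    0 < norm2D Ω u ∧ r = energy2D Ω b1 b2 b3 τ u / norm2D Ω u }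

/-- The band function `s(B;α,τ)` on the sector `S_α`. -/
def bandFn (α b1 b2 b3 τ : ℝ) : ℝ := specInf2D (sector α) b1 b2 b3 τ

/-- `Σ(B;α,τ,R)` : the Rayleigh quotient infimum over functions supported outside the
(closed Euclidean) ball of radius `R` centered at the origin. -/
def SigmaR (α b1 b2 b3 τ R : ℝ) : ℝ :=
  sInf { r : ℝ | ∃ u : ℝ × ℝ → ℂ, ContDiff ℝ (⊤ : ℕ∞) u ∧ HasCompactSupport u ∧
    (tsupport u ⊆ {x : ℝ × ℝ | R ^ 2 < x.1 ^ 2 + x.2 ^ 2}) ∧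
    0 < norm2D (sector α) u ∧
    r = energy2D (sector α) b1 b2 b3 τ u / norm2D (sector α) u }

/-- The bottom of the essential spectrum via Persson's characterization:
`s_ess(B;α,τ) = sup_{R>0} Σ(B;α,τ,R)`. -/
def sEss (α b1 b2 b3 τ : ℝ) : ℝ :=
  sSup { r : ℝ | ∃ R > (0 : ℝ), r = SigmaR α b1 b2 b3 τ R }

/-- The 3D magnetic energy on a domain `Ω ⊆ ℝ³` for the constant field `(b₁,b₂,b₃)`,
in the gauge `A = (−x₂b₃, 0, x₂b₁ − x₁b₂)`. -/
def energy3D (Ω : Set (ℝ × ℝ × ℝ)) (b1 b2 b3 : ℝ) (u : ℝ × ℝ × ℝ → ℂ) : ℝ :=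
  ∫ x in Ω,
    ‖(-Complex.I) * fderiv ℝ u x (1, 0, 0) + ((x.2.1 * b3 : ℝ) : ℂ) * u x‖ ^ 2
      + ‖fderiv ℝ u x (0, 1, 0)‖ ^ 2
      + ‖(-Complex.I) * fderiv ℝ u x (0, 0, 1) - ((x.2.1 * b1 : ℝ) : ℂ) * u x
          + ((x.1 * b2 : ℝ) : ℂ) * u x‖ ^ 2

/-- The squared `L²`-norm of `u` on a domain `Ω ⊆ ℝ³`. -/
def norm3D (Ω : Set (ℝ × ℝ × ℝ)) (u : ℝ × ℝ × ℝ → ℂ) : ℝ := ∫ x in Ω, ‖u x‖ ^ 2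

/-- `λ(B;W_α)` : the bottom of the spectrum of the Neumann magnetic Laplacian on the
wedge `W_α` with constant magnetic field `B = (b₁,b₂,b₃)`. -/
def lambdaWedge (α b1 b2 b3 : ℝ) : ℝ :=
  sInf { r : ℝ | ∃ u : ℝ × ℝ × ℝ → ℂ, ContDiff ℝ (⊤ : ℕ∞) u ∧ HasCompactSupport u ∧
    0 < norm3D (wedge α) u ∧ r = energy3D (wedge α) b1 b2 b3 u / norm3D (wedge α) u }

/-- The de Gennes function `μ₁(ξ)`: bottom of the spectrum of the Neumann realization of
`−d²/dt² + (t−ξ)²` on the half-line. -/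
def deGennes (ξ : ℝ) : ℝ :=
  sInf { r : ℝ | ∃ u : ℝ → ℂ, ContDiff ℝ (⊤ : ℕ∞) u ∧ HasCompactSupport u ∧
    (0 < ∫ t in Ioi (0 : ℝ), ‖u t‖ ^ 2) ∧
    r = (∫ t in Ioi (0 : ℝ), ‖deriv u t‖ ^ 2 + (t - ξ) ^ 2 * ‖u t‖ ^ 2) /
        (∫ t in Ioi (0 : ℝ), ‖u t‖ ^ 2) }

/-- `Θ₀ := inf_ξ μ₁(ξ)`. -/
def Theta0 : ℝ := ⨅ ξ : ℝ, deGennes ξ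

/-- The half-space `{(s,t,z) : t > 0}` in ℝ³. -/
def halfSpace3 : Set (ℝ × ℝ × ℝ) := {x | 0 < x.2.1}

/-- `σ(θ)` : the bottom of the spectrum of the Neumann magnetic Laplacian on the half-space
with a unit magnetic field making angle `θ` with the boundary. -/
def sigmaHS (θ : ℝ) : ℝ :=
  sInf { r : ℝ | ∃ u : ℝ × ℝ × ℝ → ℂ, ContDiff ℝ (⊤ : ℕ∞) u ∧ HasCompactSupport u ∧
    (0 < ∫ x in halfSpace3, ‖u x‖ ^ 2) ∧
    r = (∫ x in halfSpace3,
          ‖fderiv ℝ u x (1, 0, 0)‖ ^ 2 + ‖fderiv ℝ u x (0, 1, 0)‖ ^ 2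
            + ‖(-Complex.I) * fderiv ℝ u x (0, 0, 1)
                - ((x.2.1 * Real.cos θ : ℝ) : ℂ) * u x
                + ((x.1 * Real.sin θ : ℝ) : ℂ) * u x‖ ^ 2) /
        (∫ x in halfSpace3, ‖u x‖ ^ 2) }

/-- `μ(α)` : the bottom of the spectrum of the magnetic Neumann Laplacian on the sector
`S_α` with unit constant (scalar) magnetic field. -/
def muSector (α : ℝ) : ℝ :=
  sInf { r : ℝ | ∃ u : ℝ × ℝ → ℂ, ContDiff ℝ (⊤ : ℕ∞) u ∧ HasCompactSupport u ∧
    0 < norm2D (sector α) u ∧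
    r = (∫ x in sector α,
          ‖(-Complex.I) * fderiv ℝ u x (1, 0) + (x.2 : ℂ) * u x‖ ^ 2
            + ‖fderiv ℝ u x (0, 1)‖ ^ 2) / norm2D (sector α) u }

end MagWedge

namespace MagWedge

/-- Pointwise planar energy density. -/
def dens2 (b1 b2 b3 τ : ℝ) (u : ℝ × ℝ → ℂ) (x : ℝ × ℝ) : ℝ :=
  ‖(-Complex.I) * fderiv ℝ u x (1, 0) + ((x.2 * b3 : ℝ) : ℂ) * u x‖ ^ 2
      + ‖fderiv ℝ u x (0, 1)‖ ^ 2
      + (x.1 * b2 - x.2 * b1 - τ) ^ 2 * ‖u x‖ ^ 2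

/-- Pointwise 3D energy density. -/
def dens3 (b1 b2 b3 : ℝ) (u : ℝ × ℝ × ℝ → ℂ) (x : ℝ × ℝ × ℝ) : ℝ :=
  ‖(-Complex.I) * fderiv ℝ u x (1, 0, 0) + ((x.2.1 * b3 : ℝ) : ℂ) * u x‖ ^ 2
      + ‖fderiv ℝ u x (0, 1, 0)‖ ^ 2
      + ‖(-Complex.I) * fderiv ℝ u x (0, 0, 1) - ((x.2.1 * b1 : ℝ) : ℂ) * u x
          + ((x.1 * b2 : ℝ) : ℂ) * u x‖ ^ 2

/-- Pointwise half-space energy density. -/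
def densS (C S : ℝ) (u : ℝ × ℝ × ℝ → ℂ) (x : ℝ × ℝ × ℝ) : ℝ :=
  ‖fderiv ℝ u x (1, 0, 0)‖ ^ 2 + ‖fderiv ℝ u x (0, 1, 0)‖ ^ 2
            + ‖(-Complex.I) * fderiv ℝ u x (0, 0, 1)
                - ((x.2.1 * C : ℝ) : ℂ) * u x
                + ((x.1 * S : ℝ) : ℂ) * u x‖ ^ 2

/-- The rotated half-space. -/
def low3 (c d : ℝ) : Set (ℝ × ℝ × ℝ) := {x | 0 < d * x.1 + c * x.2.1}

/-- The rotated half-plane. -/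
def low2 (c d : ℝ) : Set (ℝ × ℝ) := {x | 0 < d * x.1 + c * x.2}

/-- Linear change of coordinates. -/
def rotL (c d p q : ℝ) : (ℝ × ℝ × ℝ) →ₗ[ℝ] (ℝ × ℝ × ℝ) where
  toFun x := (c * (p * x.1 - q * x.2.2) + d * x.2.1,
    -d * (p * x.1 - q * x.2.2) + c * x.2.1, q * x.1 + p * x.2.2)
  map_add' x y := by ext <;> simp <;> ring
  map_smul' x y := by ext <;> simp <;> ring

/-- Continuous version. -/
def rotC (c d p q : ℝ) : (ℝ × ℝ × ℝ) →L[ℝ] (ℝ × ℝ × ℝ) :=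
  LinearMap.toContinuousLinearMap (rotL c d p q)

lemma rotC_apply (c d p q : ℝ) (x : ℝ × ℝ × ℝ) : rotC c d p q x =
  (c * (p * x.1 - q * x.2.2) + d * x.2.1,
    -d * (p * x.1 - q * x.2.2) + c * x.2.1, q * x.1 + p * x.2.2) := rfl

/-- Inverse linear change of coordinates. -/
def rotI (c d p q : ℝ) (x : ℝ × ℝ × ℝ) : ℝ × ℝ × ℝ :=
  (p * (c * x.1 - d * x.2.1) + q * x.2.2, d * x.1 + c * x.2.1,
    -q * (c * x.1 - d * x.2.1) + p * x.2.2)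

lemma rotC_rotI {c d p q : ℝ} (h : c ^ 2 + d ^ 2 = 1) (h' : p ^ 2 + q ^ 2 = 1)
    (x : ℝ × ℝ × ℝ) : rotC c d p q (rotI c d p q x) = x := by
  rw [rotC_apply]
  have e : p * (rotI c d p q x).1 - q * (rotI c d p q x).2.2 = c * x.1 - d * x.2.1 := by
    simp only [rotI]; linear_combination (c * x.1 - d * x.2.1) * h'
  have e' : q * (rotI c d p q x).1 + p * (rotI c d p q x).2.2 = x.2.2 := by
    simp only [rotI]; linear_combination (x.2.2) * h'
  rw [e, e']
  ext
  · simp only [rotI]; linear_combination x.1 * h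
  · simp only [rotI]; linear_combination x.2.1 * h
  · rfl

lemma rotI_rotC {c d p q : ℝ} (h : c ^ 2 + d ^ 2 = 1) (h' : p ^ 2 + q ^ 2 = 1)
    (x : ℝ × ℝ × ℝ) : rotI c d p q (rotC c d p q x) = x := by
  have e : c * (rotC c d p q x).1 - d * (rotC c d p q x).2.1 = p * x.1 - q * x.2.2 := by
    simp only [rotC_apply]; linear_combination (p * x.1 - q * x.2.2) * h
  have e' : d * (rotC c d p q x).1 + c * (rotC c d p q x).2.1 = x.2.1 := by
    simp only [rotC_apply]; linear_combination (x.2.1) * h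
  rw [rotI, e, e']
  ext
  · simp only [rotC_apply]; linear_combination x.1 * h'
  · rfl
  · simp only [rotC_apply]; linear_combination x.2.2 * h'

lemma rotL_det {c d p q : ℝ} (h : c ^ 2 + d ^ 2 = 1) (h' : p ^ 2 + q ^ 2 = 1) :
    LinearMap.det (rotL c d p q) = 1 := by
  let e : (ℝ × ℝ × ℝ) ≃ₗ[ℝ] (Fin 3 → ℝ) :=
    { toFun := fun x => ![x.1, x.2.1, x.2.2]
      invFun := fun v => (v 0, v 1, v 2)
      map_add' := fun x y => by ext i; fin_cases i <;> rfl
      map_smul' := fun a x => by ext i; fin_cases i <;> rfl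
      left_inv := fun x => rfl
      right_inv := fun v => by ext i; fin_cases i <;> rfl }
  rw [← LinearMap.det_conj (rotL c d p q) e]
  have : ((e : (ℝ × ℝ × ℝ) →ₗ[ℝ] (Fin 3 → ℝ)) ∘ₗ rotL c d p q ∘ₗ
      (e.symm : (Fin 3 → ℝ) →ₗ[ℝ] (ℝ × ℝ × ℝ))) =
      Matrix.toLin' !![c * p, d, -(c * q); -(d * p), c, d * q; q, 0, p] := by
    refine LinearMap.ext fun v => ?_
    have hv : e.symm v = (v 0, v 1, v 2) := rfl
    have he : ∀ x, e x = ![x.1, x.2.1, x.2.2] := fun x => rfl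
    rw [Matrix.toLin'_apply]
    simp only [LinearMap.comp_apply, LinearEquiv.coe_coe, hv, he]
    ext i
    fin_cases i <;> simp [rotL, Matrix.mulVec, dotProduct, Fin.sum_univ_three] <;> ring
  rw [this, LinearMap.det_toLin', Matrix.det_fin_three]
  simp
  linear_combination (p ^ 2 + q ^ 2) * h + h'

lemma rotC_mp {c d p q : ℝ} (h : c ^ 2 + d ^ 2 = 1) (h' : p ^ 2 + q ^ 2 = 1) :
    MeasurePreserving (rotC c d p q) volume volume := by
  refine ⟨(rotC c d p q).continuous.measurable, ?_⟩
  have : (volume : Measure (ℝ × ℝ)).IsAddHaarMeasure := by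
    rw [Measure.volume_eq_prod]; infer_instance
  have : (volume : Measure (ℝ × ℝ × ℝ)).IsAddHaarMeasure := by
    rw [Measure.volume_eq_prod]; infer_instance
  have := Measure.map_linearMap_addHaar_eq_smul_addHaar (volume : Measure (ℝ × ℝ × ℝ))
    (f := rotL c d p q) (by rw [rotL_det h h']; norm_num)
  rw [rotL_det h h'] at this
  simp only [inv_one, abs_one, ENNReal.ofReal_one, one_smul] at this
  exact this

/-- Homeomorphism. -/
def rotH {c d p q : ℝ} (h : c ^ 2 + d ^ 2 = 1) (h' : p ^ 2 + q ^ 2 = 1) :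
    (ℝ × ℝ × ℝ) ≃ₜ (ℝ × ℝ × ℝ) where
  toFun := rotC c d p q
  invFun := rotI c d p q
  left_inv := rotI_rotC h h'
  right_inv := rotC_rotI h h'
  continuous_toFun := (rotC c d p q).continuous
  continuous_invFun := by unfold rotI; fun_prop

lemma rot_integral {c d p q : ℝ} (h : c ^ 2 + d ^ 2 = 1) (h' : p ^ 2 + q ^ 2 = 1)
    (f : ℝ × ℝ × ℝ → ℝ) :
    ∫ x in halfSpace3, f (rotC c d p q x) = ∫ x in low3 c d, f x := by
  have hs : halfSpace3 = rotC c d p q ⁻¹' (low3 c d) := by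
    ext x
    have e' : d * (rotC c d p q x).1 + c * (rotC c d p q x).2.1 = x.2.1 := by
      simp only [rotC_apply]; linear_combination (x.2.1) * h
    simp only [halfSpace3, low3, mem_ofPred_eq, mem_preimage, e']
  rw [hs]
  exact (rotC_mp h h').setIntegral_preimage_emb (rotH h h').measurableEmbedding _ _

/-- Gauge phase. -/
def gph (b3 S c d p q : ℝ) (x : ℝ × ℝ × ℝ) : ℝ :=
  b3 * (c * d * (p * x.1 - q * x.2.2) ^ 2 / 2 + d ^ 2 * (p * x.1 - q * x.2.2) * x.2.1
    - c * d * x.2.1 ^ 2 / 2)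
  + S * (- p * q * x.1 ^ 2 / 2 + q ^ 2 * x.1 * x.2.2 + p * q * x.2.2 ^ 2 / 2)

/-- Gauge transform plus rotation. -/
def gT (b3 S c d p q : ℝ) (W : ℝ × ℝ × ℝ → ℂ) (x : ℝ × ℝ × ℝ) : ℂ :=
  Complex.exp (-(Complex.I * (gph b3 S c d p q x : ℝ))) * W (rotC c d p q x)

lemma gph_contDiff (b3 S c d p q : ℝ) : ContDiff ℝ (⊤ : ℕ∞) (gph b3 S c d p q) := by
  unfold gph; fun_prop

/-- Derivative of the gauge phase. -/
def dgph (b3 S c d p q : ℝ) (x e : ℝ × ℝ × ℝ) : ℝ :=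
  b3 * (c * d * (p * x.1 - q * x.2.2) * (p * e.1 - q * e.2.2)
     + d ^ 2 * ((p * e.1 - q * e.2.2) * x.2.1 + (p * x.1 - q * x.2.2) * e.2.1)
    - c * d * x.2.1 * e.2.1)
  + S * (- p * q * x.1 * e.1 + q ^ 2 * (e.1 * x.2.2 + x.1 * e.2.2) + p * q * x.2.2 * e.2.2)

lemma line_deriv {E F : Type*} [NormedAddCommGroup E] [NormedSpace ℝ E]
    [NormedAddCommGroup F] [NormedSpace ℝ F] {f : E → F}
    {x : E} (hf : DifferentiableAt ℝ f x) (e : E) {v : F}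
    (h : HasDerivAt (fun t : ℝ => f (x + t • e)) v 0) : fderiv ℝ f x e = v := by
  rw [← hf.lineDeriv_eq_fderiv]
  exact HasLineDerivAt.lineDeriv h

lemma line_hasDeriv {E F : Type*} [NormedAddCommGroup E] [NormedSpace ℝ E]
    [NormedAddCommGroup F] [NormedSpace ℝ F] {f : E → F}
    {x : E} (hf : DifferentiableAt ℝ f x) (e : E) :
    HasDerivAt (fun t : ℝ => f (x + t • e)) (fderiv ℝ f x e) 0 :=
  hf.hasFDerivAt.hasLineDerivAt e

lemma gph_deriv (b3 S c d p q : ℝ) (x e : ℝ × ℝ × ℝ) :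
    fderiv ℝ (gph b3 S c d p q) x e = dgph b3 S c d p q x e := by
  apply line_deriv ((gph_contDiff b3 S c d p q).differentiable (by simp) x)
  have key : (fun t : ℝ => gph b3 S c d p q (x + t • e)) = fun t =>
      gph b3 S c d p q x + dgph b3 S c d p q x e * t + gph b3 S c d p q e * t ^ 2 := by
    ext t; simp [gph, dgph]; ring
  rw [key]
  have h1 := ((hasDerivAt_id (0 : ℝ)).const_mul (dgph b3 S c d p q x e)).const_add
    (gph b3 S c d p q x)
  have h2 := ((hasDerivAt_id (0 : ℝ)).pow 2).const_mul (gph b3 S c d p q e)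
  convert! h1.add h2 using 1
  simp

lemma phase_fderiv {E : Type*} [NormedAddCommGroup E] [NormedSpace ℝ E]
    {φ : E → ℝ} {f : E → ℂ} {x : E}
    (hφ : DifferentiableAt ℝ φ x) (hf : DifferentiableAt ℝ f x) (e : E) :
    fderiv ℝ (fun x => Complex.exp (-(Complex.I * (φ x : ℝ))) * f x) x e =
      Complex.exp (-(Complex.I * (φ x : ℝ))) *
        (fderiv ℝ f x e - Complex.I * (fderiv ℝ φ x e : ℝ) * f x) := by
  have h0 : DifferentiableAt ℝ (fun x => ((φ x : ℝ) : ℂ)) x :=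
    Complex.ofRealCLM.differentiableAt.comp x hφ
  have h1 : DifferentiableAt ℝ (fun x => Complex.exp (-(Complex.I * (φ x : ℝ)))) x := by
    fun_prop
  apply line_deriv (h1.mul hf)
  have ha := ((line_hasDeriv hφ e).ofReal_comp.const_mul Complex.I).neg.cexp
  have hb := ha.mul (line_hasDeriv hf e)
  refine hb.congr_deriv ?_
  simp
  ring

lemma gT_fderiv (b3 S c d p q : ℝ) {W : ℝ × ℝ × ℝ → ℂ} (hW : ContDiff ℝ (⊤ : ℕ∞) W)
    (x e : ℝ × ℝ × ℝ) : fderiv ℝ (gT b3 S c d p q W) x e =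
    Complex.exp (-(Complex.I * (gph b3 S c d p q x : ℝ))) *
      (fderiv ℝ W (rotC c d p q x) (rotC c d p q e)
        - Complex.I * (dgph b3 S c d p q x e : ℝ) * W (rotC c d p q x)) := by
  have hd : DifferentiableAt ℝ W (rotC c d p q x) := hW.differentiable (by simp) _
  have h2 : DifferentiableAt ℝ (fun y => W (rotC c d p q y)) x :=
    hd.comp x (rotC c d p q).differentiableAt
  have := phase_fderiv ((gph_contDiff b3 S c d p q).differentiable (by simp) x) h2 e
  rw [gph_deriv] at this
  rw [show gT b3 S c d p q W = fun x => Complex.exp (-(Complex.I * (gph b3 S c d p q x : ℝ))) *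
    W (rotC c d p q x) from rfl, this]
  congr 2
  have h3 := (hd.hasFDerivAt.comp x (rotC c d p q).hasFDerivAt).fderiv
  rw [show (fun y => W (rotC c d p q y)) = W ∘ (rotC c d p q) from rfl, h3]
  rfl

lemma norm_phase (r : ℝ) : ‖Complex.exp (-(Complex.I * (r : ℝ)))‖ = 1 := by
  rw [Complex.norm_exp]; simp

lemma fderiv_split (W : ℝ × ℝ × ℝ → ℂ) (x : ℝ × ℝ × ℝ) (a b e : ℝ) :
    fderiv ℝ W x (a, b, e) = (a : ℂ) * fderiv ℝ W x (1, 0, 0) + (b : ℂ) * fderiv ℝ W x (0, 1, 0)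
      + (e : ℂ) * fderiv ℝ W x (0, 0, 1) := by
  have : ((a, b, e) : ℝ × ℝ × ℝ) = a • ((1 : ℝ), (0 : ℝ), (0 : ℝ)) + b • ((0 : ℝ), (1 : ℝ), (0 : ℝ))
      + e • ((0 : ℝ), (0 : ℝ), (1 : ℝ)) := by
    ext <;> simp
  rw [this, map_add, map_add, map_smul, map_smul, map_smul]
  simp only [Complex.real_smul]

lemma rot_norm {p q : ℝ} (h : p ^ 2 + q ^ 2 = 1) (a b : ℂ) :
    ‖(p : ℂ) * a + (q : ℂ) * b‖ ^ 2 + ‖-(q : ℂ) * a + (p : ℂ) * b‖ ^ 2 = ‖a‖ ^ 2 + ‖b‖ ^ 2 := by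
  simp only [Complex.sq_norm, Complex.normSq_apply]
  simp
  linear_combination (a.re ^ 2 + a.im ^ 2 + b.re ^ 2 + b.im ^ 2) * h

lemma densS_gT {c d p q : ℝ} (h : c ^ 2 + d ^ 2 = 1) (h' : p ^ 2 + q ^ 2 = 1)
    {sg b3 C S : ℝ} (h3 : b3 = C * q) (hC : sg * (c ^ 2 - d ^ 2) = C * p)
    (hS : S = sg * (2 * c * d)) {W : ℝ × ℝ × ℝ → ℂ} (hW : ContDiff ℝ (⊤ : ℕ∞) W)
    (x : ℝ × ℝ × ℝ) :
    densS C S (gT b3 S c d p q W) x = dens3 (sg * c) (sg * d) b3 W (rotC c d p q x) := by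
  set X := rotC c d p q x with hX
  set g := Complex.exp (-(Complex.I * (gph b3 S c d p q x : ℝ))) with hg
  have hgn : ‖g‖ = 1 := norm_phase _
  set a1 := fderiv ℝ W X (1, 0, 0) with ha1
  set a2 := fderiv ℝ W X (0, 1, 0) with ha2
  set a3 := fderiv ℝ W X (0, 0, 1) with ha3
  set w := W X with hw
  set D1 : ℂ := (-Complex.I) * a1 + ((X.2.1 * b3 : ℝ) : ℂ) * w with hD1
  set D2 : ℂ := (-Complex.I) * a2 with hD2
  set D3 : ℂ := (-Complex.I) * a3 - ((X.2.1 * (sg * c) : ℝ) : ℂ) * w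
          + ((X.1 * (sg * d) : ℝ) : ℂ) * w with hD3
  have x1 : X.1 = c * (p * x.1 - q * x.2.2) + d * x.2.1 := rfl
  have x2 : X.2.1 = -d * (p * x.1 - q * x.2.2) + c * x.2.1 := rfl
  set Y : ℂ := (c : ℂ) * D1 + ((-d : ℝ) : ℂ) * D2 with hY
  set T : ℂ := -((-d : ℝ) : ℂ) * D1 + (c : ℂ) * D2 with hT
  have I2 : Complex.I ^ 2 = -1 := Complex.I_sq
  have es : fderiv ℝ (gT b3 S c d p q W) x (1, 0, 0) = Complex.I * g * ((p : ℂ) * Y + (q : ℂ) * D3) := by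
    have hr : p * (c * (X.2.1 * b3)) + q * (-(X.2.1 * (sg * c)) + X.1 * (sg * d)) =
        - dgph b3 S c d p q x (1, 0, 0) := by
      rw [x1, x2]
      simp only [dgph]
      linear_combination (p * b3 * x.2.1) * h + p * x.2.1 * h3 - q * x.2.1 * hC
        - q * (p * x.1 - q * x.2.2) * hS
    have hr' : (p : ℂ) * (c * (X.2.1 * b3)) + q * (-(X.2.1 * (sg * c)) + X.1 * (sg * d)) =
        - (dgph b3 S c d p q x (1, 0, 0) : ℝ) := by exact_mod_cast hr
    rw [gT_fderiv _ _ _ _ _ _ hW, ← hX, rotC_apply, fderiv_split, ← ha1, ← ha2, ← ha3, ← hw, ← hg,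
      hY, hD1, hD2, hD3]
    push_cast
    linear_combination (-Complex.I * g * w) * hr' + g * (p * (c * a1 - d * a2) + q * a3) * I2
  have et : fderiv ℝ (gT b3 S c d p q W) x (0, 1, 0) = Complex.I * g * T := by
    have hr : d * (X.2.1 * b3) = - dgph b3 S c d p q x (0, 1, 0) := by
      rw [x2]
      simp only [dgph]
      ring
    have hr' : (d : ℂ) * (X.2.1 * b3) =
        - (dgph b3 S c d p q x (0, 1, 0) : ℝ) := by exact_mod_cast hr
    rw [gT_fderiv _ _ _ _ _ _ hW, ← hX, rotC_apply, fderiv_split, ← ha1, ← ha2, ← ha3, ← hw, ← hg,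
      hT, hD1, hD2]
    push_cast
    linear_combination (-Complex.I * g * w) * hr' + g * (d * a1 + c * a2) * I2
  have ez : (-Complex.I) * fderiv ℝ (gT b3 S c d p q W) x (0, 0, 1)
      - ((x.2.1 * C : ℝ) : ℂ) * gT b3 S c d p q W x + ((x.1 * S : ℝ) : ℂ) * gT b3 S c d p q W x
      = g * (-(q : ℂ) * Y + (p : ℂ) * D3) := by
    have hr : -q * (c * (X.2.1 * b3)) + p * (-(X.2.1 * (sg * c)) + X.1 * (sg * d)) =
        - dgph b3 S c d p q x (0, 0, 1) - x.2.1 * C + x.1 * S := by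
      rw [x1, x2]
      simp only [dgph]
      linear_combination (-q * b3 * x.2.1) * h - q * x.2.1 * h3 - p * x.2.1 * hC
        - p * (p * x.1 - q * x.2.2) * hS + (S * x.1 - C * x.2.1) * h'
    have hr' : -(q : ℂ) * (c * (X.2.1 * b3)) + p * (-(X.2.1 * (sg * c)) + X.1 * (sg * d)) =
        - (dgph b3 S c d p q x (0, 0, 1) : ℝ) - x.2.1 * C + x.1 * S := by exact_mod_cast hr
    have hgt : gT b3 S c d p q W x = g * w := rfl
    rw [hgt, gT_fderiv _ _ _ _ _ _ hW, ← hX, rotC_apply, fderiv_split, ← ha1, ← ha2, ← ha3, ← hw,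
      ← hg, hY, hD1, hD2, hD3]
    push_cast
    linear_combination (-g * w) * hr' + g * w * (dgph b3 S c d p q x (0, 0, 1) : ℝ) * I2
  have n1 := rot_norm h' Y D3
  have n2 := rot_norm (p := c) (q := -d) (by linarith) D1 D2
  have n3 : ‖D2‖ = ‖a2‖ := by rw [hD2, norm_mul]; simp
  unfold densS dens3
  rw [es, et, ez, ← ha1, ← ha2, ← ha3, ← hw, ← hD1, ← hD3]
  simp only [norm_mul, hgn, Complex.norm_I, one_mul]
  rw [← hY, ← hT] at n2
  rw [← n3]
  linarith

lemma gT_norm (b3 S c d p q : ℝ) (W : ℝ × ℝ × ℝ → ℂ) (x : ℝ × ℝ × ℝ) :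
    ‖gT b3 S c d p q W x‖ = ‖W (rotC c d p q x)‖ := by
  rw [gT, norm_mul, norm_phase, one_mul]

lemma gT_contDiff (b3 S c d p q : ℝ) {W : ℝ × ℝ × ℝ → ℂ} (hW : ContDiff ℝ (⊤ : ℕ∞) W) :
    ContDiff ℝ (⊤ : ℕ∞) (gT b3 S c d p q W) := by
  have h1 : ContDiff ℝ (⊤ : ℕ∞) fun x => (gph b3 S c d p q x : ℂ) :=
    Complex.ofRealCLM.contDiff.comp (gph_contDiff b3 S c d p q)
  have h2 : ContDiff ℝ (⊤ : ℕ∞) fun x => W (rotC c d p q x) := hW.comp (rotC c d p q).contDiff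
  unfold gT
  exact (ContDiff.cexp (contDiff_const.mul h1).neg).mul h2

lemma gT_compact (b3 S : ℝ) {c d p q : ℝ} (h : c ^ 2 + d ^ 2 = 1) (h' : p ^ 2 + q ^ 2 = 1)
    {W : ℝ × ℝ × ℝ → ℂ} (hW : HasCompactSupport W) :
    HasCompactSupport (gT b3 S c d p q W) := by
  have : HasCompactSupport (W ∘ (rotH h h')) := hW.comp_homeomorph _
  exact this.mul_left

/-- Forward transfer: from the rotated half-space to the model half-space. -/
lemma transfer_fwd {c d p q : ℝ} (h : c ^ 2 + d ^ 2 = 1) (h' : p ^ 2 + q ^ 2 = 1)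
    {sg b3 C S : ℝ} (h3 : b3 = C * q) (hC : sg * (c ^ 2 - d ^ 2) = C * p)
    (hS : S = sg * (2 * c * d)) {W : ℝ × ℝ × ℝ → ℂ} (hW : ContDiff ℝ (⊤ : ℕ∞) W) :
    (∫ x in halfSpace3, densS C S (gT b3 S c d p q W) x) =
      ∫ x in low3 c d, dens3 (sg * c) (sg * d) b3 W x := by
  rw [← rot_integral h h']
  congr 1; ext x
  exact densS_gT h h' h3 hC hS hW x

lemma transfer_norm (b3 S : ℝ) {c d p q : ℝ} (h : c ^ 2 + d ^ 2 = 1) (h' : p ^ 2 + q ^ 2 = 1)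
    (W : ℝ × ℝ × ℝ → ℂ) :
    (∫ x in halfSpace3, ‖gT b3 S c d p q W x‖ ^ 2) = ∫ x in low3 c d, ‖W x‖ ^ 2 := by
  rw [← rot_integral h h']
  simp only [gT_norm]

/-- Surjectivity of the gauge-rotation transform. -/
lemma gT_surj (b3 S : ℝ) {c d p q : ℝ} (h : c ^ 2 + d ^ 2 = 1) (h' : p ^ 2 + q ^ 2 = 1)
    {w : ℝ × ℝ × ℝ → ℂ} (hw : ContDiff ℝ (⊤ : ℕ∞) w) (hc : HasCompactSupport w) :
    ∃ W : ℝ × ℝ × ℝ → ℂ, ContDiff ℝ (⊤ : ℕ∞) W ∧ HasCompactSupport W ∧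
      gT b3 S c d p q W = w := by
  have hI : ContDiff ℝ (⊤ : ℕ∞) (rotI c d p q) := by unfold rotI; fun_prop
  have h1 : ContDiff ℝ (⊤ : ℕ∞) fun x => (gph b3 S c d p q (rotI c d p q x) : ℂ) :=
    Complex.ofRealCLM.contDiff.comp ((gph_contDiff b3 S c d p q).comp hI)
  refine ⟨fun x => Complex.exp (Complex.I * (gph b3 S c d p q (rotI c d p q x) : ℝ)) *
    w (rotI c d p q x), ?_, ?_, ?_⟩
  · exact (ContDiff.cexp (contDiff_const.mul h1)).mul (hw.comp hI)
  · have : HasCompactSupport (w ∘ (rotH h h').symm) := hc.comp_homeomorph _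
    exact this.mul_left
  · ext x
    simp only [gT, rotI_rotC h h']
    rw [← mul_assoc, ← Complex.exp_add]
    simp

lemma cont_fderiv_apply {E : Type*} [NormedAddCommGroup E] [NormedSpace ℝ E]
    {v : E → ℂ} (hv : ContDiff ℝ (⊤ : ℕ∞) v) (e : E) :
    Continuous fun x => fderiv ℝ v x e :=
  (hv.continuous_fderiv (by simp)).clm_apply continuous_const

lemma dens2_cont (b1 b2 b3 τ : ℝ) {v : ℝ × ℝ → ℂ} (hv : ContDiff ℝ (⊤ : ℕ∞) v) :
    Continuous (dens2 b1 b2 b3 τ v) := by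
  have h1 := cont_fderiv_apply hv (1, 0)
  have h2 := cont_fderiv_apply hv (0, 1)
  have h3 := hv.continuous
  unfold dens2
  fun_prop

lemma dens2_zero (b1 b2 b3 τ : ℝ) {v : ℝ × ℝ → ℂ} {x : ℝ × ℝ} (hx : x ∉ tsupport v) :
    dens2 b1 b2 b3 τ v x = 0 := by
  simp [dens2, image_eq_zero_of_notMem_tsupport hx, fderiv_of_notMem_tsupport ℝ hx]

lemma dens2_integrable (b1 b2 b3 τ : ℝ) {v : ℝ × ℝ → ℂ} (hv : ContDiff ℝ (⊤ : ℕ∞) v)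
    (hc : HasCompactSupport v) : Integrable (dens2 b1 b2 b3 τ v) :=
  (dens2_cont b1 b2 b3 τ hv).integrable_of_hasCompactSupport
    (HasCompactSupport.intro hc fun _ hx => dens2_zero b1 b2 b3 τ hx)

lemma sq_integrable {E : Type*} [TopologicalSpace E] [R1Space E] [MeasurableSpace E] [OpensMeasurableSpace E]
    {μ : Measure E} [IsFiniteMeasureOnCompacts μ] {v : E → ℂ} (hv : Continuous v)
    (hc : HasCompactSupport v) : Integrable (fun x => ‖v x‖ ^ 2) μ :=
  (hv.norm.pow 2).integrable_of_hasCompactSupport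
    (HasCompactSupport.intro hc fun _ hx => by simp [image_eq_zero_of_notMem_tsupport hx])

lemma dens2_nonneg (b1 b2 b3 τ : ℝ) (v : ℝ × ℝ → ℂ) (x : ℝ × ℝ) :
    0 ≤ dens2 b1 b2 b3 τ v x := by unfold dens2; positivity

lemma dens3_nonneg (b1 b2 b3 : ℝ) (v : ℝ × ℝ × ℝ → ℂ) (x : ℝ × ℝ × ℝ) :
    0 ≤ dens3 b1 b2 b3 v x := by unfold dens3; positivity

lemma dens3_cont (b1 b2 b3 : ℝ) {v : ℝ × ℝ × ℝ → ℂ} (hv : ContDiff ℝ (⊤ : ℕ∞) v) :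
    Continuous (dens3 b1 b2 b3 v) := by
  have h1 := cont_fderiv_apply hv (1, 0, 0)
  have h2 := cont_fderiv_apply hv (0, 1, 0)
  have h4 := cont_fderiv_apply hv (0, 0, 1)
  have h3 := hv.continuous
  unfold dens3
  fun_prop

lemma dens3_integrable (b1 b2 b3 : ℝ) {v : ℝ × ℝ × ℝ → ℂ} (hv : ContDiff ℝ (⊤ : ℕ∞) v)
    (hc : HasCompactSupport v) : Integrable (dens3 b1 b2 b3 v) :=
  (dens3_cont b1 b2 b3 hv).integrable_of_hasCompactSupport
    (HasCompactSupport.intro hc fun x hx => by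
      simp [dens3, image_eq_zero_of_notMem_tsupport hx, fderiv_of_notMem_tsupport ℝ hx])

lemma low2_meas (c d : ℝ) : MeasurableSet (low2 c d) := by
  have : IsOpen (low2 c d) := isOpen_lt continuous_const (by fun_prop)
  exact this.measurableSet

lemma assoc_integral (c d : ℝ) (F : ℝ × ℝ × ℝ → ℝ) :
    ∫ x in low3 c d, F x = ∫ y in (low2 c d) ×ˢ (univ : Set ℝ), F (y.1.1, y.1.2, y.2)
      ∂((volume : Measure (ℝ × ℝ)).prod volume) := by
  have h := (volume_preserving_prodAssoc (α₁ := ℝ) (β₁ := ℝ) (γ₁ := ℝ)).setIntegral_preimage_emb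
    MeasurableEquiv.prodAssoc.measurableEmbedding F (low3 c d)
  rw [← h, ← Measure.volume_eq_prod]
  have hs : (MeasurableEquiv.prodAssoc : (ℝ × ℝ) × ℝ ≃ᵐ ℝ × ℝ × ℝ) ⁻¹' low3 c d =
      low2 c d ×ˢ (univ : Set ℝ) := by
    ext x
    simp [low3, low2, MeasurableEquiv.prodAssoc]
  rw [hs]
  rfl

/-- Tensor trial function. -/
def tens (τ : ℝ) (v : ℝ × ℝ → ℂ) (η : ℝ → ℝ) (x : ℝ × ℝ × ℝ) : ℂ :=
  Complex.exp (-(Complex.I * ((τ * x.2.2 : ℝ) : ℂ))) * (v (x.1, x.2.1) * (η x.2.2 : ℝ))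

lemma tens_contDiff (τ : ℝ) {v : ℝ × ℝ → ℂ} {η : ℝ → ℝ} (hv : ContDiff ℝ (⊤ : ℕ∞) v)
    (hη : ContDiff ℝ (⊤ : ℕ∞) η) : ContDiff ℝ (⊤ : ℕ∞) (tens τ v η) := by
  have h1 : ContDiff ℝ (⊤ : ℕ∞) fun x : ℝ × ℝ × ℝ => ((τ * x.2.2 : ℝ) : ℂ) :=
    Complex.ofRealCLM.contDiff.comp (f := fun x : ℝ × ℝ × ℝ => τ * x.2.2) (by fun_prop)
  have h2 : ContDiff ℝ (⊤ : ℕ∞) fun x : ℝ × ℝ × ℝ => v (x.1, x.2.1) := hv.comp (by fun_prop)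
  have h3 : ContDiff ℝ (⊤ : ℕ∞) fun x : ℝ × ℝ × ℝ => ((η x.2.2 : ℝ) : ℂ) :=
    Complex.ofRealCLM.contDiff.comp (hη.comp (by fun_prop))
  exact (ContDiff.cexp (contDiff_const.mul h1).neg).mul (h2.mul h3)

lemma tens_compact (τ : ℝ) {v : ℝ × ℝ → ℂ} {η : ℝ → ℝ} (hv : HasCompactSupport v)
    (hη : HasCompactSupport η) : HasCompactSupport (tens τ v η) := by
  have hK : IsCompact ((fun y : (ℝ × ℝ) × ℝ => (y.1.1, y.1.2, y.2)) '' (tsupport v ×ˢ tsupport η)) :=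
    (IsCompact.prod hv hη).image (by fun_prop)
  refine HasCompactSupport.intro hK fun x hx => ?_
  by_cases h1 : (x.1, x.2.1) ∈ tsupport v
  · by_cases h2 : x.2.2 ∈ tsupport η
    · exact absurd ⟨((x.1, x.2.1), x.2.2), ⟨h1, h2⟩, rfl⟩ hx
    · simp [tens, image_eq_zero_of_notMem_tsupport h2]
  · simp [tens, image_eq_zero_of_notMem_tsupport h1]

lemma tens_fderiv (τ : ℝ) {v : ℝ × ℝ → ℂ} {η : ℝ → ℝ} (hv : ContDiff ℝ (⊤ : ℕ∞) v)
    (hη : ContDiff ℝ (⊤ : ℕ∞) η) (x e : ℝ × ℝ × ℝ) : fderiv ℝ (tens τ v η) x e =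
    Complex.exp (-(Complex.I * ((τ * x.2.2 : ℝ) : ℂ))) *
     (fderiv ℝ v (x.1, x.2.1) (e.1, e.2.1) * η x.2.2 +
        v (x.1, x.2.1) * ((deriv η x.2.2 * e.2.2 : ℝ) : ℂ)
      - Complex.I * ((τ * e.2.2 : ℝ) : ℂ) * (v (x.1, x.2.1) * (η x.2.2 : ℝ))) := by
  have hvd : DifferentiableAt ℝ v (x.1, x.2.1) := hv.differentiable (by simp) _
  have hηd : DifferentiableAt ℝ η x.2.2 := hη.differentiable (by simp) _
  have h2 : DifferentiableAt ℝ (fun x : ℝ × ℝ × ℝ => v (x.1, x.2.1)) x :=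
    DifferentiableAt.comp x (f := fun x : ℝ × ℝ × ℝ => (x.1, x.2.1)) hvd (by fun_prop)
  have h30 : DifferentiableAt ℝ (fun x : ℝ × ℝ × ℝ => η x.2.2) x :=
    DifferentiableAt.comp x (f := fun x : ℝ × ℝ × ℝ => x.2.2) hηd (by fun_prop)
  have h3 : DifferentiableAt ℝ (fun x : ℝ × ℝ × ℝ => ((η x.2.2 : ℝ) : ℂ)) x :=
    Complex.ofRealCLM.differentiableAt.comp x h30
  have hφ : DifferentiableAt ℝ (fun x : ℝ × ℝ × ℝ => τ * x.2.2) x := by fun_prop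
  have key := phase_fderiv hφ (h2.mul h3) e
  have e1 : fderiv ℝ (fun x : ℝ × ℝ × ℝ => τ * x.2.2) x e = τ * e.2.2 := by
    apply line_deriv hφ
    have : HasDerivAt (fun t : ℝ => x.2.2 + t * e.2.2) (e.2.2) 0 := by
      simpa using ((hasDerivAt_id (0 : ℝ)).mul_const e.2.2).const_add x.2.2
    simpa using this.const_mul τ
  have e2 : fderiv ℝ (fun x : ℝ × ℝ × ℝ => v (x.1, x.2.1) * ((η x.2.2 : ℝ) : ℂ)) x e =
      fderiv ℝ v (x.1, x.2.1) (e.1, e.2.1) * η x.2.2 +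
        v (x.1, x.2.1) * ((deriv η x.2.2 * e.2.2 : ℝ) : ℂ) := by
    apply line_deriv (h2.mul h3)
    have a1 := line_hasDeriv hvd (e.1, e.2.1)
    have a2 : HasDerivAt (fun t : ℝ => η (x.2.2 + t * e.2.2)) (deriv η x.2.2 * e.2.2) 0 := by
      have : HasDerivAt (fun t : ℝ => x.2.2 + t * e.2.2) (e.2.2) 0 := by
        simpa using ((hasDerivAt_id (0 : ℝ)).mul_const e.2.2).const_add x.2.2
      exact HasDerivAt.comp (h₂ := η) (0 : ℝ) (by simpa using hηd.hasDerivAt) this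
    have := a1.mul a2.ofReal_comp
    refine (this.congr_deriv ?_)
    simp
  rw [e1] at key
  rw [show (fun x : ℝ × ℝ × ℝ => v (x.1, x.2.1)) * (fun x : ℝ × ℝ × ℝ => ((η x.2.2 : ℝ) : ℂ)) =
    fun x : ℝ × ℝ × ℝ => v (x.1, x.2.1) * ((η x.2.2 : ℝ) : ℂ) from rfl, e2] at key
  exact key

lemma norm_mix (a b : ℝ) (z : ℂ) : ‖(a : ℂ) * z - Complex.I * b * z‖ ^ 2 =
    a ^ 2 * ‖z‖ ^ 2 + b ^ 2 * ‖z‖ ^ 2 := by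
  simp only [Complex.sq_norm, Complex.normSq_apply]
  simp
  ring

lemma tens_dens (b1 b2 b3 τ : ℝ) {v : ℝ × ℝ → ℂ} {η : ℝ → ℝ} (hv : ContDiff ℝ (⊤ : ℕ∞) v)
    (hη : ContDiff ℝ (⊤ : ℕ∞) η) (x : ℝ × ℝ × ℝ) :
    dens3 b1 b2 b3 (tens τ v η) x = dens2 b1 b2 b3 τ v (x.1, x.2.1) * (η x.2.2) ^ 2
      + ‖v (x.1, x.2.1)‖ ^ 2 * (deriv η x.2.2) ^ 2 := by
  unfold dens3 dens2
  simp only [tens_fderiv τ hv hη]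
  set g := Complex.exp (-(Complex.I * ((τ * x.2.2 : ℝ) : ℂ))) with hg
  have hgn : ‖g‖ = 1 := norm_phase _
  have ht : tens τ v η x = g * (v (x.1, x.2.1) * (η x.2.2 : ℝ)) := rfl
  rw [ht]
  set w := v (x.1, x.2.1)
  set h := η x.2.2
  set h' := deriv η x.2.2
  have e0 : fderiv ℝ v (x.1, x.2.1) (0, 0) = 0 := map_zero _
  have n1 : ∀ z : ℂ, ‖g * z‖ = ‖z‖ := fun z => by rw [norm_mul, hgn, one_mul]
  set a1 := fderiv ℝ v (x.1, x.2.1) (1, 0)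
  set a2 := fderiv ℝ v (x.1, x.2.1) (0, 1)
  have t1 : -Complex.I * (g * (a1 * h + w * ((h' * 0 : ℝ) : ℂ) -
      Complex.I * ((τ * 0 : ℝ) : ℂ) * (w * h))) + ((x.2.1 * b3 : ℝ) : ℂ) * (g * (w * h)) =
      g * ((-Complex.I * a1 + ((x.2.1 * b3 : ℝ) : ℂ) * w) * h) := by
    push_cast; ring
  have t2 : g * (a2 * h + w * ((h' * 0 : ℝ) : ℂ) -
      Complex.I * ((τ * 0 : ℝ) : ℂ) * (w * h)) = g * (a2 * h) := by
    push_cast; ring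
  have t3 : -Complex.I * (g * (0 * h + w * ((h' * 1 : ℝ) : ℂ) -
      Complex.I * ((τ * 1 : ℝ) : ℂ) * (w * h))) - ((x.2.1 * b1 : ℝ) : ℂ) * (g * (w * h))
      + ((x.1 * b2 : ℝ) : ℂ) * (g * (w * h)) =
      g * ((((x.1 * b2 - x.2.1 * b1 - τ) * h : ℝ) : ℂ) * w - Complex.I * (h' : ℝ) * w) := by
    push_cast
    linear_combination g * τ * w * h * Complex.I_sq
  rw [e0, t1, t2, t3, n1, n1, n1, norm_mix, norm_mul, norm_mul, Complex.norm_real, mul_pow, mul_pow,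
    Real.norm_eq_abs, sq_abs]
  ring

lemma tens_energy (b1 b2 b3 τ c d : ℝ) {v : ℝ × ℝ → ℂ} {η : ℝ → ℝ} (hv : ContDiff ℝ (⊤ : ℕ∞) v)
    (hη : ContDiff ℝ (⊤ : ℕ∞) η) (hvc : HasCompactSupport v) (hηc : HasCompactSupport η) :
    ∫ x in low3 c d, dens3 b1 b2 b3 (tens τ v η) x =
      (∫ x in low2 c d, dens2 b1 b2 b3 τ v x) * (∫ t, (η t) ^ 2)
      + (∫ x in low2 c d, ‖v x‖ ^ 2) * (∫ t, (deriv η t) ^ 2) := by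
  rw [assoc_integral]
  simp only [tens_dens b1 b2 b3 τ hv hη]
  have i1 : Integrable (fun t => (η t) ^ 2) :=
    (hη.continuous.pow 2).integrable_of_hasCompactSupport
    (HasCompactSupport.intro hηc fun x hx => by simp [image_eq_zero_of_notMem_tsupport hx])
  have i2 : Integrable (fun t => (deriv η t) ^ 2) :=
    ((hη.continuous_deriv (by simp)).pow 2).integrable_of_hasCompactSupport
    (HasCompactSupport.intro hηc.deriv fun x hx => by
      simp [image_eq_zero_of_notMem_tsupport hx])
  have j1 := ((dens2_integrable b1 b2 b3 τ hv hvc).mul_prod i1).integrableOn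
    (s := (low2 c d) ×ˢ (univ : Set ℝ))
  have j2 := ((sq_integrable (μ := volume) hv.continuous hvc).mul_prod i2).integrableOn
    (s := (low2 c d) ×ˢ (univ : Set ℝ))
  rw [integral_add j1 j2]
  have k1 := setIntegral_prod_mul (μ := (volume : Measure (ℝ × ℝ))) (ν := (volume : Measure ℝ))
    (dens2 b1 b2 b3 τ v) (fun t => (η t) ^ 2) (low2 c d) univ
  have k2 := setIntegral_prod_mul (μ := (volume : Measure (ℝ × ℝ))) (ν := (volume : Measure ℝ))
    (fun x => ‖v x‖ ^ 2) (fun t => (deriv η t) ^ 2) (low2 c d) univ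
  rw [Measure.restrict_univ] at k1 k2
  rw [← k1, ← k2]

lemma tens_sq (τ c d : ℝ) (v : ℝ × ℝ → ℂ) (η : ℝ → ℝ) :
    ∫ x in low3 c d, ‖tens τ v η x‖ ^ 2 = (∫ x in low2 c d, ‖v x‖ ^ 2) * (∫ t, (η t) ^ 2) := by
  rw [assoc_integral]
  have k1 := setIntegral_prod_mul (μ := (volume : Measure (ℝ × ℝ))) (ν := (volume : Measure ℝ))
    (fun x => ‖v x‖ ^ 2) (fun t => (η t) ^ 2) (low2 c d) univ
  rw [Measure.restrict_univ] at k1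
  rw [← k1]
  congr 1; ext y
  rw [tens, norm_mul, norm_phase, norm_mul, Complex.norm_real, one_mul, mul_pow,
    Real.norm_eq_abs, sq_abs]

/-- The 3D lower bound passes to each 2D fibre. -/
lemma lower_2D (b1 b2 b3 τ c d K : ℝ)
    (hK : ∀ W : ℝ × ℝ × ℝ → ℂ, ContDiff ℝ (⊤ : ℕ∞) W → HasCompactSupport W →
      K * ∫ x in low3 c d, ‖W x‖ ^ 2 ≤ ∫ x in low3 c d, dens3 b1 b2 b3 W x)
    {v : ℝ × ℝ → ℂ} (hv : ContDiff ℝ (⊤ : ℕ∞) v) (hvc : HasCompactSupport v) :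
    K * ∫ x in low2 c d, ‖v x‖ ^ 2 ≤ ∫ x in low2 c d, dens2 b1 b2 b3 τ v x := by
  let χ : ContDiffBump (0 : ℝ) := ⟨1, 2, one_pos, one_lt_two⟩
  have hχ : ContDiff ℝ (⊤ : ℕ∞) χ := χ.contDiff
  have hχc : HasCompactSupport χ := χ.hasCompactSupport
  set A := ∫ t, (χ t) ^ 2 with hA
  set B := ∫ t, (deriv χ t) ^ 2 with hB
  have hApos : 0 < A := by
    have hcs : HasCompactSupport fun t => (χ t) ^ 2 :=
      HasCompactSupport.intro hχc fun x hx => by simp [image_eq_zero_of_notMem_tsupport hx]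
    refine Continuous.integral_pos_of_hasCompactSupport_nonneg_nonzero
      (x := 0) (hχ.continuous.pow 2) hcs (fun t => by positivity) ?_
    have : χ 0 = 1 := χ.one_of_mem_closedBall (by simp [χ])
    simp [this]
  set N := ∫ x in low2 c d, ‖v x‖ ^ 2
  set E := ∫ x in low2 c d, dens2 b1 b2 b3 τ v x
  have main : ∀ l : ℝ, 0 < l → K * N ≤ E + N * B / A * l ^ 2 := by
    intro l hl
    have hη : ContDiff ℝ (⊤ : ℕ∞) (fun t => χ (l * t)) := hχ.comp (by fun_prop)
    have hηc : HasCompactSupport (fun t => χ (l * t)) :=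
      hχc.comp_homeomorph (Homeomorph.mulLeft₀ l hl.ne')
    have h := hK _ (tens_contDiff τ hv hη) (tens_compact τ hvc hηc)
    rw [tens_energy b1 b2 b3 τ c d hv hη hvc hηc, tens_sq] at h
    have s1 : ∫ t, (χ (l * t)) ^ 2 = l⁻¹ * A := by
      rw [Measure.integral_comp_mul_left (fun t => (χ t) ^ 2) l, abs_of_pos (by positivity)]
      rfl
    have s2 : ∫ t, (deriv (fun t => χ (l * t)) t) ^ 2 = l * B := by
      have : ∀ t, (deriv (fun t => χ (l * t)) t) ^ 2 = l ^ 2 * (deriv χ (l * t)) ^ 2 := by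
        intro t
        have := deriv_comp_mul_left l χ t
        rw [this, smul_eq_mul, mul_pow]
      simp only [this]
      rw [integral_const_mul, Measure.integral_comp_mul_left (fun t => (deriv χ t) ^ 2) l,
        abs_of_pos (by positivity), smul_eq_mul, ← hB]
      field_simp
    rw [s1, s2] at h
    have hl2 : 0 < l / A := by positivity
    have h2 := mul_le_mul_of_nonneg_left h hl2.le
    have q1 : l / A * (K * (N * (l⁻¹ * A))) = K * N := by field_simp
    have q2 : l / A * (E * (l⁻¹ * A) + N * (l * B)) = E + N * B / A * l ^ 2 := by
      field_simp
    rw [q1, q2] at h2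
    exact h2
  have lim : Tendsto (fun l : ℝ => E + N * B / A * l ^ 2) (nhdsWithin 0 (Ioi 0)) (nhds E) := by
    have : Continuous (fun l : ℝ => E + N * B / A * l ^ 2) := by fun_prop
    have h := this.tendsto 0
    simp only [ne_eq, OfNat.ofNat_ne_zero, not_false_eq_true, zero_pow, mul_zero, add_zero] at h
    exact h.mono_left nhdsWithin_le_nhds
  refine ge_of_tendsto lim ?_
  filter_upwards [self_mem_nhdsWithin] with l hl
  exact main l hl

lemma param_hasFDerivAt {F : Type} [NormedAddCommGroup F] [NormedSpace ℝ F] [CompleteSpace F]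
    {G : (ℝ × ℝ) × ℝ → F} (hG : ContDiff ℝ (⊤ : ℕ∞) G) (hc : HasCompactSupport G) (x : ℝ × ℝ) :
    HasFDerivAt (fun x => ∫ t, G (x, t))
      (∫ t, (fderiv ℝ G (x, t)).comp (ContinuousLinearMap.inl ℝ (ℝ × ℝ) ℝ)) x := by
  have hcf : Continuous (fderiv ℝ G) := hG.continuous_fderiv (by simp)
  obtain ⟨C, hC⟩ := hcf.bounded_above_of_compact_support (hc.fderiv ℝ)
  have hK : IsCompact (Prod.snd '' tsupport G) := IsCompact.image hc continuous_snd
  have hsl : ∀ y : ℝ × ℝ, HasCompactSupport fun t => G (y, t) := fun y =>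
    HasCompactSupport.intro hK fun t ht => by
      by_contra h
      exact ht ⟨(y, t), by_contra fun h' => h (image_eq_zero_of_notMem_tsupport h'), rfl⟩
  have hslc : ∀ y : ℝ × ℝ, Continuous fun t => G (y, t) := fun y =>
    hG.continuous.comp (by fun_prop)
  set il := ContinuousLinearMap.inl ℝ (ℝ × ℝ) ℝ
  have hd : ∀ y : ℝ × ℝ, Continuous fun t => (fderiv ℝ G (y, t)).comp il := fun y =>
    (hcf.comp (by fun_prop : Continuous fun t : ℝ => (y, t))).clm_comp continuous_const
  refine hasFDerivAt_integral_of_dominated_of_fderiv_le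
    (bound := (Prod.snd '' tsupport G).indicator fun _ => C * ‖il‖) (s := univ) univ_mem
    (Eventually.of_forall fun y => (hslc y).aestronglyMeasurable)
    ((hslc x).integrable_of_hasCompactSupport (hsl x))
    (hd x).aestronglyMeasurable
    (F' := fun y t => (fderiv ℝ G (y, t)).comp il) ?_ ?_ ?_
  · refine Eventually.of_forall fun t y _ => ?_
    by_cases ht : t ∈ Prod.snd '' tsupport G
    · rw [indicator_of_mem ht]
      refine (ContinuousLinearMap.opNorm_comp_le _ _).trans ?_
      exact mul_le_mul_of_nonneg_right (hC _) (norm_nonneg _)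
    · have : (y, t) ∉ tsupport G := fun h => ht ⟨_, h, rfl⟩
      rw [indicator_of_notMem ht, fderiv_of_notMem_tsupport ℝ this]
      simp
  · exact (integrable_indicator_iff hK.measurableSet).2
      (integrableOn_const (hs := hK.measure_lt_top.ne))
  · refine Eventually.of_forall fun t y _ => ?_
    have h1 : HasFDerivAt G (fderiv ℝ G (y, t)) (y, t) :=
      (hG.differentiable (by simp) _).hasFDerivAt
    have h2 : HasFDerivAt (fun y : ℝ × ℝ => (y, t)) il y := hasFDerivAt_prodMk_left y t
    exact h1.comp y h2

lemma param_contDiff_nat (n : ℕ) : ∀ {F : Type} [NormedAddCommGroup F] [NormedSpace ℝ F]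
    [CompleteSpace F] {G : (ℝ × ℝ) × ℝ → F} (_ : ContDiff ℝ (⊤ : ℕ∞) G)
    (_ : HasCompactSupport G), ContDiff ℝ n fun x => ∫ t, G (x, t) := by
  induction n with
  | zero =>
    intro F _ _ _ G hG hc
    refine contDiff_zero.2 (continuous_iff_continuousAt.2 fun x => ?_)
    exact (param_hasFDerivAt hG hc x).continuousAt
  | succ n ih =>
    intro F _ _ _ G hG hc
    have := contDiff_succ_iff_fderiv (𝕜 := ℝ) (n := (n : WithTop ℕ∞))
      (f := fun x => ∫ t, G (x, t))
    push_cast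
    rw [this]
    refine ⟨fun x => (param_hasFDerivAt hG hc x).differentiableAt, by simp, ?_⟩
    have e : fderiv ℝ (fun x => ∫ t, G (x, t)) = fun x =>
        ∫ t, (fderiv ℝ G (x, t)).comp (ContinuousLinearMap.inl ℝ (ℝ × ℝ) ℝ) := by
      ext1 x; exact (param_hasFDerivAt hG hc x).fderiv
    rw [e]
    apply ih (G := fun y => (fderiv ℝ G y).comp (ContinuousLinearMap.inl ℝ (ℝ × ℝ) ℝ))
    · exact (hG.fderiv_right (m := (⊤ : ℕ∞)) (by simp)).clm_comp contDiff_const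
    · refine HasCompactSupport.intro (hc.fderiv ℝ) fun x hx => ?_
      rw [image_eq_zero_of_notMem_tsupport hx]; simp

lemma param_contDiff {G : (ℝ × ℝ) × ℝ → ℂ} (hG : ContDiff ℝ (⊤ : ℕ∞) G)
    (hc : HasCompactSupport G) : ContDiff ℝ (⊤ : ℕ∞) fun x => ∫ t, G (x, t) :=
  contDiff_infty.2 fun n => param_contDiff_nat n hG hc

/-- Partial Fourier transform. -/
def hat (G : ℝ × ℝ × ℝ → ℂ) (ξ : ℝ) (x : ℝ × ℝ) : ℂ :=
  ∫ t, Complex.exp (-(Complex.I * ((2 * π * ξ * t : ℝ) : ℂ))) * G (x.1, x.2, t)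

lemma hat_eq (G : ℝ × ℝ × ℝ → ℂ) (ξ : ℝ) (x : ℝ × ℝ) :
    hat G ξ x = FourierTransform.fourier (fun t => G (x.1, x.2, t)) ξ := by
  rw [Real.fourier_real_eq_integral_exp_smul]
  unfold hat
  congr 1; ext t
  rw [smul_eq_mul]
  congr 2
  push_cast
  ring

/-- Integrand of the partial Fourier transform. -/
def hatI (G : ℝ × ℝ × ℝ → ℂ) (ξ : ℝ) (y : (ℝ × ℝ) × ℝ) : ℂ :=
  Complex.exp (-(Complex.I * ((2 * π * ξ * y.2 : ℝ) : ℂ))) * G (y.1.1, y.1.2, y.2)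

lemma assoc_cc {G : ℝ × ℝ × ℝ → ℂ} (hc : HasCompactSupport G) :
    HasCompactSupport fun y : (ℝ × ℝ) × ℝ => G (y.1.1, y.1.2, y.2) :=
  hc.comp_homeomorph (Homeomorph.prodAssoc ℝ ℝ ℝ)

lemma assoc_cd {G : ℝ × ℝ × ℝ → ℂ} (hG : ContDiff ℝ (⊤ : ℕ∞) G) :
    ContDiff ℝ (⊤ : ℕ∞) fun y : (ℝ × ℝ) × ℝ => G (y.1.1, y.1.2, y.2) :=
  hG.comp (by fun_prop)

lemma hatI_cd {G : ℝ × ℝ × ℝ → ℂ} (hG : ContDiff ℝ (⊤ : ℕ∞) G) (ξ : ℝ) :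
    ContDiff ℝ (⊤ : ℕ∞) (hatI G ξ) := by
  have h1 : ContDiff ℝ (⊤ : ℕ∞) fun x : (ℝ × ℝ) × ℝ => ((2 * π * ξ * x.2 : ℝ) : ℂ) :=
    Complex.ofRealCLM.contDiff.comp (f := fun x : (ℝ × ℝ) × ℝ => 2 * π * ξ * x.2) (by fun_prop)
  exact (ContDiff.cexp (contDiff_const.mul h1).neg).mul (assoc_cd hG)

lemma hatI_cc {G : ℝ × ℝ × ℝ → ℂ} (hc : HasCompactSupport G) (ξ : ℝ) :
    HasCompactSupport (hatI G ξ) := (assoc_cc hc).mul_left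

lemma hat_cd {G : ℝ × ℝ × ℝ → ℂ} (hG : ContDiff ℝ (⊤ : ℕ∞) G) (hc : HasCompactSupport G) (ξ : ℝ) :
    ContDiff ℝ (⊤ : ℕ∞) (hat G ξ) := param_contDiff (hatI_cd hG ξ) (hatI_cc hc ξ)

lemma hat_cc {G : ℝ × ℝ × ℝ → ℂ} (hc : HasCompactSupport G) (ξ : ℝ) :
    HasCompactSupport (hat G ξ) := by
  refine HasCompactSupport.intro
    (IsCompact.image (assoc_cc hc) (continuous_fst : Continuous (Prod.fst : (ℝ × ℝ) × ℝ → ℝ × ℝ)))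
    fun x hx => ?_
  have : ∀ t, G (x.1, x.2, t) = 0 := by
    intro t
    by_contra h
    exact hx ⟨(x, t), by_contra fun h' => h (image_eq_zero_of_notMem_tsupport
      (f := fun y : (ℝ × ℝ) × ℝ => G (y.1.1, y.1.2, y.2)) h'), rfl⟩
  simp [hat, this]

lemma slice_cc {G : ℝ × ℝ × ℝ → ℂ} (hc : HasCompactSupport G) (x : ℝ × ℝ) :
    HasCompactSupport fun t => G (x.1, x.2, t) := by
  refine HasCompactSupport.intro
    (IsCompact.image (assoc_cc hc) (continuous_snd : Continuous (Prod.snd : (ℝ × ℝ) × ℝ → ℝ)))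
    fun t ht => ?_
  by_contra h
  exact ht ⟨(x, t), by_contra fun h' => h (image_eq_zero_of_notMem_tsupport
      (f := fun y : (ℝ × ℝ) × ℝ => G (y.1.1, y.1.2, y.2)) h'), rfl⟩

lemma slice_cd {G : ℝ × ℝ × ℝ → ℂ} (hG : ContDiff ℝ (⊤ : ℕ∞) G) (x : ℝ × ℝ) :
    ContDiff ℝ (⊤ : ℕ∞) fun t => G (x.1, x.2, t) :=
  hG.comp (by fun_prop)

lemma hatI_integrable {G : ℝ × ℝ × ℝ → ℂ} (hG : Continuous G) (hc : HasCompactSupport G)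
    (ξ : ℝ) (x : ℝ × ℝ) : Integrable fun t => hatI G ξ (x, t) := by
  refine Continuous.integrable_of_hasCompactSupport ?_ (HasCompactSupport.mul_left (slice_cc hc x))
  unfold hatI
  fun_prop

lemma hat_fderiv {G : ℝ × ℝ × ℝ → ℂ} (hG : ContDiff ℝ (⊤ : ℕ∞) G) (hc : HasCompactSupport G)
    (ξ : ℝ) (x e : ℝ × ℝ) :
    fderiv ℝ (hat G ξ) x e = hat (fun y => fderiv ℝ G y (e.1, e.2, 0)) ξ x := by
  have h := param_hasFDerivAt (hatI_cd hG ξ) (hatI_cc hc ξ) x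
  have h' : fderiv ℝ (hat G ξ) x = _ := h.fderiv
  have hInt0 : Integrable fun t => (fderiv ℝ (hatI G ξ) (x, t)).comp
      (ContinuousLinearMap.inl ℝ (ℝ × ℝ) ℝ) := by
    have hcf : Continuous (fderiv ℝ (hatI G ξ)) := (hatI_cd hG ξ).continuous_fderiv (by simp)
    refine Continuous.integrable_of_hasCompactSupport
      ((hcf.comp (by fun_prop : Continuous fun t : ℝ => (x, t))).clm_comp continuous_const) ?_
    refine HasCompactSupport.intro
      (IsCompact.image (hatI_cc hc ξ) (continuous_snd : Continuous (Prod.snd : (ℝ × ℝ) × ℝ → ℝ)))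
      fun t ht => ?_
    have : (x, t) ∉ tsupport (hatI G ξ) := fun h => ht ⟨_, h, rfl⟩
    rw [fderiv_of_notMem_tsupport ℝ this]
    simp
  rw [h', ContinuousLinearMap.integral_apply hInt0]
  unfold hat
  congr 1; ext t
  have hφ : DifferentiableAt ℝ (fun y : (ℝ × ℝ) × ℝ => 2 * π * ξ * y.2) (x, t) := by fun_prop
  have hg : DifferentiableAt ℝ (fun y : (ℝ × ℝ) × ℝ => G (y.1.1, y.1.2, y.2)) (x, t) :=
    (assoc_cd hG).differentiable (by simp) _
  have key := phase_fderiv hφ hg (e, 0)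
  have e1 : fderiv ℝ (fun y : (ℝ × ℝ) × ℝ => 2 * π * ξ * y.2) (x, t) (e, 0) = 0 := by
    apply line_deriv hφ
    simpa using hasDerivAt_const (0 : ℝ) (2 * π * ξ * t)
  have e2 : fderiv ℝ (fun y : (ℝ × ℝ) × ℝ => G (y.1.1, y.1.2, y.2)) (x, t) (e, 0) =
      fderiv ℝ G (x.1, x.2, t) (e.1, e.2, 0) := by
    apply line_deriv hg
    have := line_hasDeriv (hG.differentiable (by simp) (x.1, x.2, t)) (e.1, e.2, 0)
    simpa using this
  rw [e1, e2] at key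
  simp only [ContinuousLinearMap.comp_apply, ContinuousLinearMap.inl_apply]
  refine key.trans ?_
  simp

lemma hat_fderiv3 {G : ℝ × ℝ × ℝ → ℂ} (hG : ContDiff ℝ (⊤ : ℕ∞) G) (hc : HasCompactSupport G)
    (ξ : ℝ) (x : ℝ × ℝ) :
    hat (fun y => fderiv ℝ G y (0, 0, 1)) ξ x = (2 * π * Complex.I * ξ) * hat G ξ x := by
  rw [hat_eq, hat_eq]
  have hs := slice_cd hG x
  have hd : deriv (fun t => G (x.1, x.2, t)) = fun t => fderiv ℝ G (x.1, x.2, t) (0, 0, 1) := by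
    ext t
    have h1 := (hG.differentiable (by simp) (x.1, x.2, t)).hasFDerivAt
    have h2 : HasDerivAt (fun t : ℝ => (x.1, x.2, t)) ((0 : ℝ), (0 : ℝ), (1 : ℝ)) t :=
      (hasDerivAt_const t x.1).prodMk ((hasDerivAt_const t x.2).prodMk (hasDerivAt_id t))
    exact (h1.comp_hasDerivAt t h2).deriv
  have := Real.fourier_deriv (f := fun t => G (x.1, x.2, t))
    (hs.continuous.integrable_of_hasCompactSupport (slice_cc hc x))
    (hs.differentiable (by simp))
    ((hs.continuous_deriv (by simp)).integrable_of_hasCompactSupport (slice_cc hc x).deriv)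
  rw [hd] at this
  rw [this]
  simp

lemma hat_lin {G H : ℝ × ℝ × ℝ → ℂ} (hG : Continuous G) (hGc : HasCompactSupport G)
    (hH : Continuous H) (hHc : HasCompactSupport H) (a : ℂ) (f : ℝ × ℝ → ℂ)
    (ξ : ℝ) (x : ℝ × ℝ) :
    hat (fun y => a * G y + f (y.1, y.2.1) * H y) ξ x = a * hat G ξ x + f x * hat H ξ x := by
  have h1 := hatI_integrable hG hGc ξ x
  have h2 := hatI_integrable hH hHc ξ x
  have e : a * hat G ξ x + f x * hat H ξ x =
      ∫ t, (a * hatI G ξ (x, t) + f x * hatI H ξ (x, t)) := by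
    rw [integral_add (h1.const_mul a) (h2.const_mul (f x)), integral_const_mul, integral_const_mul]
    rfl
  rw [e]
  unfold hat
  congr 1; ext t
  simp only [hatI]
  ring

lemma hat_plancherel {G : ℝ × ℝ × ℝ → ℂ} (hG : ContDiff ℝ (⊤ : ℕ∞) G) (hc : HasCompactSupport G)
    (x : ℝ × ℝ) :
    ∫⁻ ξ, ENNReal.ofReal (‖hat G ξ x‖ ^ 2) = ∫⁻ t, ENNReal.ofReal (‖G (x.1, x.2, t)‖ ^ 2) := by
  let f : SchwartzMap ℝ ℂ := (slice_cc hc x).toSchwartzMap (slice_cd hG x)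
  have hf : ∀ t, f t = G (x.1, x.2, t) := fun t => rfl
  have hF : ∀ ξ, hat G ξ x = (FourierTransform.fourier f) ξ := by
    intro ξ
    rw [hat_eq, SchwartzMap.fourier_coe]
    rfl
  have h := SchwartzMap.integral_norm_sq_fourier f
  have sqi : ∀ g : SchwartzMap ℝ ℂ, Integrable fun t => ‖g t‖ ^ 2 := fun g =>
    (memLp_two_iff_integrable_sq_norm g.continuous.aestronglyMeasurable).1 (g.memLp 2)
  simp only [hF, ← hf]
  rw [← ofReal_integral_eq_lintegral_ofReal (sqi _) (Eventually.of_forall fun _ => by positivity),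
    ← ofReal_integral_eq_lintegral_ofReal (sqi _) (Eventually.of_forall fun _ => by positivity), h]

lemma hat_meas {G : ℝ × ℝ × ℝ → ℂ} (hG : Continuous G) :
    Measurable fun p : ℝ × (ℝ × ℝ) => hat G p.1 p.2 := by
  have : StronglyMeasurable fun q : (ℝ × (ℝ × ℝ)) × ℝ =>
      Complex.exp (-(Complex.I * ((2 * π * q.1.1 * q.2 : ℝ) : ℂ))) * G (q.1.2.1, q.1.2.2, q.2) := by
    apply Continuous.stronglyMeasurable
    fun_prop
  exact this.integral_prod_right'.measurable

lemma hat_swap {G : ℝ × ℝ × ℝ → ℂ} (hG : ContDiff ℝ (⊤ : ℕ∞) G) (hc : HasCompactSupport G)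
    (c d : ℝ) :
    ∫⁻ ξ, ∫⁻ x in low2 c d, ENNReal.ofReal (‖hat G ξ x‖ ^ 2) =
      ENNReal.ofReal (∫ x in low3 c d, ‖G x‖ ^ 2) := by
  have hm := hat_meas hG.continuous
  rw [lintegral_lintegral_swap (by
    apply Measurable.aemeasurable
    exact (hm.norm.pow_const 2).ennreal_ofReal)]
  simp only [hat_plancherel hG hc]
  rw [assoc_integral, ← Measure.prod_restrict, Measure.restrict_univ]
  have hcont : Continuous fun y : (ℝ × ℝ) × ℝ => ‖G (y.1.1, y.1.2, y.2)‖ ^ 2 := by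
    have := hG.continuous
    fun_prop
  have hi : Integrable (fun y : (ℝ × ℝ) × ℝ => ‖G (y.1.1, y.1.2, y.2)‖ ^ 2)
      (((volume : Measure (ℝ × ℝ)).restrict (low2 c d)).prod volume) := by
    have h0 := sq_integrable (μ := (volume : Measure (ℝ × ℝ)).prod (volume : Measure ℝ))
      (assoc_cd hG).continuous (assoc_cc hc)
    have h1 := h0.integrableOn (s := low2 c d ×ˢ (univ : Set ℝ))
    rw [IntegrableOn, ← Measure.prod_restrict, Measure.restrict_univ] at h1
    exact h1
  rw [ofReal_integral_eq_lintegral_ofReal hi (Eventually.of_forall fun _ => by positivity),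
    lintegral_prod _ (hcont.measurable.ennreal_ofReal.aemeasurable)]

lemma fderiv_apply_cd {G : ℝ × ℝ × ℝ → ℂ} (hG : ContDiff ℝ (⊤ : ℕ∞) G) (e : ℝ × ℝ × ℝ) :
    ContDiff ℝ (⊤ : ℕ∞) fun y => fderiv ℝ G y e :=
  (hG.fderiv_right (m := (⊤ : ℕ∞)) (by simp)).clm_apply contDiff_const

lemma fderiv_apply_cc {G : ℝ × ℝ × ℝ → ℂ} (hc : HasCompactSupport G) (e : ℝ × ℝ × ℝ) :
    HasCompactSupport fun y => fderiv ℝ G y e :=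
  HasCompactSupport.intro hc fun x hx => by simp [fderiv_of_notMem_tsupport ℝ hx]

/-- A low-energy 3D function has a low-energy fibre. -/
lemma exists_fibre (b1 b2 b3 c d K : ℝ) {W : ℝ × ℝ × ℝ → ℂ} (hW : ContDiff ℝ (⊤ : ℕ∞) W)
    (hc : HasCompactSupport W)
    (hlt : ∫ x in low3 c d, dens3 b1 b2 b3 W x < K * ∫ x in low3 c d, ‖W x‖ ^ 2) :
    ∃ τ : ℝ, ∃ v : ℝ × ℝ → ℂ, ContDiff ℝ (⊤ : ℕ∞) v ∧ HasCompactSupport v ∧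
      ∫ x in low2 c d, dens2 b1 b2 b3 τ v x < K * ∫ x in low2 c d, ‖v x‖ ^ 2 := by
  by_contra hcon
  push Not at hcon
  have hE0 : 0 ≤ ∫ x in low3 c d, dens3 b1 b2 b3 W x :=
    integral_nonneg fun x => dens3_nonneg b1 b2 b3 W x
  have hN0 : 0 ≤ ∫ x in low3 c d, ‖W x‖ ^ 2 := integral_nonneg fun x => by positivity
  have hK : 0 ≤ K := by
    by_contra h
    push Not at h
    nlinarith
  set W1 := fun y => fderiv ℝ W y (1, 0, 0) with hW1
  set W2 := fun y => fderiv ℝ W y (0, 1, 0) with hW2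
  set W3 := fun y => fderiv ℝ W y (0, 0, 1) with hW3
  set G1 := fun y : ℝ × ℝ × ℝ => (-Complex.I) * W1 y + ((y.2.1 * b3 : ℝ) : ℂ) * W y with hG1
  set G3 := fun y : ℝ × ℝ × ℝ => (-Complex.I) * W3 y
    + ((y.1 * b2 - y.2.1 * b1 : ℝ) : ℂ) * W y with hG3
  have cd1 : ContDiff ℝ (⊤ : ℕ∞) W1 := fderiv_apply_cd hW _
  have cd2 : ContDiff ℝ (⊤ : ℕ∞) W2 := fderiv_apply_cd hW _
  have cd3 : ContDiff ℝ (⊤ : ℕ∞) W3 := fderiv_apply_cd hW _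
  have cc1 : HasCompactSupport W1 := fderiv_apply_cc hc _
  have cc2 : HasCompactSupport W2 := fderiv_apply_cc hc _
  have cc3 : HasCompactSupport W3 := fderiv_apply_cc hc _
  have gd1 : ContDiff ℝ (⊤ : ℕ∞) G1 := by
    refine (contDiff_const.mul cd1).add (ContDiff.mul ?_ hW)
    exact Complex.ofRealCLM.contDiff.comp (f := fun y : ℝ × ℝ × ℝ => y.2.1 * b3) (by fun_prop)
  have gd3 : ContDiff ℝ (⊤ : ℕ∞) G3 := by
    refine (contDiff_const.mul cd3).add (ContDiff.mul ?_ hW)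
    exact Complex.ofRealCLM.contDiff.comp
      (f := fun y : ℝ × ℝ × ℝ => y.1 * b2 - y.2.1 * b1) (by fun_prop)
  have gc1 : HasCompactSupport G1 := cc1.mul_left.add hc.mul_left
  have gc3 : HasCompactSupport G3 := cc3.mul_left.add hc.mul_left
  have hdens : ∀ ξ x, dens2 b1 b2 b3 (-(2 * π * ξ)) (hat W ξ) x =
      ‖hat G1 ξ x‖ ^ 2 + ‖hat W2 ξ x‖ ^ 2 + ‖hat G3 ξ x‖ ^ 2 := by
    intro ξ x
    have l1 := hat_lin cd1.continuous cc1 hW.continuous hc (-Complex.I)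
      (fun x => ((x.2 * b3 : ℝ) : ℂ)) ξ x
    have l3 := hat_lin cd3.continuous cc3 hW.continuous hc (-Complex.I)
      (fun x => ((x.1 * b2 - x.2 * b1 : ℝ) : ℂ)) ξ x
    have f1 := hat_fderiv hW hc ξ x (1, 0)
    have f2 := hat_fderiv hW hc ξ x (0, 1)
    have f3 := hat_fderiv3 hW hc ξ x
    unfold dens2
    rw [f1, f2]
    rw [show hat G1 ξ x = _ from l1, show hat G3 ξ x = _ from l3, show hat W3 ξ x = _ from f3]
    have e3 : -Complex.I * (2 * π * Complex.I * ξ * hat W ξ x)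
        + ((x.1 * b2 - x.2 * b1 : ℝ) : ℂ) * hat W ξ x =
        ((x.1 * b2 - x.2 * b1 - -(2 * π * ξ) : ℝ) : ℂ) * hat W ξ x := by
      push_cast
      linear_combination (-2 * π * ξ * hat W ξ x) * Complex.I_sq
    rw [e3, norm_mul _ (hat W ξ x), Complex.norm_real, mul_pow, Real.norm_eq_abs, sq_abs]
  have hd3 : ∀ x, dens3 b1 b2 b3 W x = ‖G1 x‖ ^ 2 + ‖W2 x‖ ^ 2 + ‖G3 x‖ ^ 2 := by
    intro x
    simp only [dens3, hG1, hG3, hW1, hW2, hW3]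
    congr 3
    push_cast; ring
  have m1 := hat_meas gd1.continuous
  have m2 := hat_meas cd2.continuous
  have m3 := hat_meas gd3.continuous
  have m0 := hat_meas hW.continuous
  have mm : ∀ {G : ℝ × ℝ × ℝ → ℂ}, Continuous G → Measurable fun ξ =>
      ∫⁻ x in low2 c d, ENNReal.ofReal (‖hat G ξ x‖ ^ 2) := by
    intro G hG
    exact Measurable.lintegral_prod_right' (((hat_meas hG).norm.pow_const 2).ennreal_ofReal)
  have ms : ∀ {G : ℝ × ℝ × ℝ → ℂ}, Continuous G → ∀ ξ, Measurable fun x =>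
      ENNReal.ofReal (‖hat G ξ x‖ ^ 2) := by
    intro G hG ξ
    have := (hat_meas hG).comp (measurable_prodMk_left (x := ξ))
    exact (this.norm.pow_const 2).ennreal_ofReal
  have step : ∀ ξ, ENNReal.ofReal K * ∫⁻ x in low2 c d, ENNReal.ofReal (‖hat W ξ x‖ ^ 2) ≤
      (∫⁻ x in low2 c d, ENNReal.ofReal (‖hat G1 ξ x‖ ^ 2))
      + (∫⁻ x in low2 c d, ENNReal.ofReal (‖hat W2 ξ x‖ ^ 2))
      + (∫⁻ x in low2 c d, ENNReal.ofReal (‖hat G3 ξ x‖ ^ 2)) := by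
    intro ξ
    have hv := hat_cd hW hc ξ
    have hvc := hat_cc hc ξ
    have h := hcon (-(2 * π * ξ)) (hat W ξ) hv hvc
    have h' := ENNReal.ofReal_le_ofReal h
    rw [ENNReal.ofReal_mul hK,
      ofReal_integral_eq_lintegral_ofReal (sq_integrable hv.continuous hvc).integrableOn
        (Eventually.of_forall fun _ => by positivity),
      ofReal_integral_eq_lintegral_ofReal (dens2_integrable _ _ _ _ hv hvc).integrableOn
        (Eventually.of_forall fun _ => dens2_nonneg _ _ _ _ _ _)] at h'
    refine h'.trans (le_of_eq ?_)
    simp only [hdens]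
    have ms12 : Measurable fun x => ENNReal.ofReal (‖hat G1 ξ x‖ ^ 2)
        + ENNReal.ofReal (‖hat W2 ξ x‖ ^ 2) := (ms gd1.continuous ξ).add (ms cd2.continuous ξ)
    rw [← lintegral_add_left (ms gd1.continuous ξ), ← lintegral_add_left ms12]
    congr 1; ext x
    rw [ENNReal.ofReal_add (by positivity) (by positivity),
      ENNReal.ofReal_add (by positivity) (by positivity)]
  have tot := lintegral_mono (μ := (volume : Measure ℝ)) step
  have mm12 : Measurable fun ξ => (∫⁻ x in low2 c d, ENNReal.ofReal (‖hat G1 ξ x‖ ^ 2))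
      + (∫⁻ x in low2 c d, ENNReal.ofReal (‖hat W2 ξ x‖ ^ 2)) :=
    (mm gd1.continuous).add (mm cd2.continuous)
  have i12 : IntegrableOn (fun x => ‖G1 x‖ ^ 2 + ‖W2 x‖ ^ 2) (low3 c d) :=
    ((sq_integrable gd1.continuous gc1).add (sq_integrable cd2.continuous cc2)).integrableOn
  rw [lintegral_const_mul _ (mm hW.continuous),
    lintegral_add_left mm12,
    lintegral_add_left (mm gd1.continuous),
    hat_swap hW hc, hat_swap gd1 gc1, hat_swap cd2 cc2, hat_swap gd3 gc3,
    ← ENNReal.ofReal_mul hK,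
    ← ENNReal.ofReal_add (integral_nonneg fun _ => by positivity)
      (integral_nonneg fun _ => by positivity),
    ← ENNReal.ofReal_add (add_nonneg (integral_nonneg fun _ => by positivity)
      (integral_nonneg fun _ => by positivity)) (integral_nonneg fun _ => by positivity),
    ← integral_add (sq_integrable gd1.continuous gc1).integrableOn
      (sq_integrable cd2.continuous cc2).integrableOn,
    ← integral_add i12
      (sq_integrable gd3.continuous gc3).integrableOn] at tot
  simp only [← hd3] at tot
  rw [ENNReal.ofReal_le_ofReal_iff hE0] at tot
  linarith

/-- Magnetic translation along the lower edge. -/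
def mtr (b3 c d a : ℝ) (v : ℝ × ℝ → ℂ) (x : ℝ × ℝ) : ℂ :=
  Complex.exp (-(Complex.I * ((-(a * d * b3) * x.1 : ℝ) : ℂ))) * v (x - (a * c, -(a * d)))

lemma mtr_norm (b3 c d a : ℝ) (v : ℝ × ℝ → ℂ) (x : ℝ × ℝ) :
    ‖mtr b3 c d a v x‖ = ‖v (x - (a * c, -(a * d)))‖ := by
  rw [mtr, norm_mul, norm_phase, one_mul]

lemma mtr_cd (b3 c d a : ℝ) {v : ℝ × ℝ → ℂ} (hv : ContDiff ℝ (⊤ : ℕ∞) v) :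
    ContDiff ℝ (⊤ : ℕ∞) (mtr b3 c d a v) := by
  have h1 : ContDiff ℝ (⊤ : ℕ∞) fun x : ℝ × ℝ => ((-(a * d * b3) * x.1 : ℝ) : ℂ) :=
    Complex.ofRealCLM.contDiff.comp (f := fun x : ℝ × ℝ => -(a * d * b3) * x.1) (by fun_prop)
  unfold mtr
  exact (ContDiff.cexp (contDiff_const.mul h1).neg).mul
    (hv.comp (contDiff_id.sub contDiff_const))

lemma mtr_cc (b3 c d a : ℝ) {v : ℝ × ℝ → ℂ} (hv : HasCompactSupport v) :
    HasCompactSupport (mtr b3 c d a v) := by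
  have : HasCompactSupport (v ∘ (Homeomorph.subRight (a * c, -(a * d)))) :=
    hv.comp_homeomorph _
  exact this.mul_left

lemma mtr_fderiv (b3 c d a : ℝ) {v : ℝ × ℝ → ℂ} (hv : ContDiff ℝ (⊤ : ℕ∞) v) (x e : ℝ × ℝ) :
    fderiv ℝ (mtr b3 c d a v) x e =
      Complex.exp (-(Complex.I * ((-(a * d * b3) * x.1 : ℝ) : ℂ))) *
      (fderiv ℝ v (x - (a * c, -(a * d))) e
        - Complex.I * ((-(a * d * b3) * e.1 : ℝ) : ℂ) * v (x - (a * c, -(a * d)))) := by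
  have hφ : DifferentiableAt ℝ (fun x : ℝ × ℝ => -(a * d * b3) * x.1) x := by fun_prop
  have hd : DifferentiableAt ℝ (fun x => v (x - (a * c, -(a * d)))) x :=
    ((hv.comp (contDiff_id.sub contDiff_const)).differentiable (by simp)) x
  have := phase_fderiv hφ hd e
  have hφ' : fderiv ℝ (fun x : ℝ × ℝ => -(a * d * b3) * x.1) x e = -(a * d * b3) * e.1 := by
    apply line_deriv hφ
    have h1 := ((hasDerivAt_id (0 : ℝ)).mul_const e.1).const_add x.1
    have h2 := h1.const_mul (-(a * d * b3))
    simpa using h2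
  rw [hφ', fderiv_comp_sub] at this
  exact this

lemma mtr_dens (sg b3 c d a τ : ℝ) {v : ℝ × ℝ → ℂ} (hv : ContDiff ℝ (⊤ : ℕ∞) v) (x : ℝ × ℝ) :
    dens2 (sg * c) (sg * d) b3 (τ + a * (sg * (2 * c * d))) (mtr b3 c d a v) x =
      dens2 (sg * c) (sg * d) b3 τ v (x - (a * c, -(a * d))) := by
  unfold dens2
  rw [mtr_fderiv _ _ _ _ hv, mtr_fderiv _ _ _ _ hv, mtr_norm]
  set y := x - (a * c, -(a * d)) with hy
  have y1 : y.1 = x.1 - a * c := by simp [hy]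
  have y2 : y.2 = x.2 + a * d := by simp [hy]
  have e1 : -Complex.I * (Complex.exp (-(Complex.I * ((-(a * d * b3) * x.1 : ℝ) : ℂ))) *
      (fderiv ℝ v y (1, 0) - Complex.I * ((-(a * d * b3) * 1 : ℝ) : ℂ) * v y))
      + ((x.2 * b3 : ℝ) : ℂ) * mtr b3 c d a v x =
      Complex.exp (-(Complex.I * ((-(a * d * b3) * x.1 : ℝ) : ℂ))) *
      (-Complex.I * fderiv ℝ v y (1, 0) + ((y.2 * b3 : ℝ) : ℂ) * v y) := by
    rw [mtr, ← hy, y2]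
    push_cast
    linear_combination (-Complex.exp (-(Complex.I * (-(a * d * b3) * x.1))) * (a * d * b3) * v y)
      * Complex.I_sq
  rw [e1, norm_mul, norm_phase, one_mul, norm_mul, norm_phase, one_mul, y1, y2]
  congr 2
  · simp
  · ring

lemma low2_trans (c d a : ℝ) (F : ℝ × ℝ → ℝ) :
    ∫ x in low2 c d, F (x - (a * c, -(a * d))) = ∫ x in low2 c d, F x := by
  rw [← integral_indicator (low2_meas c d), ← integral_indicator (low2_meas c d),
    ← integral_sub_right_eq_self ((low2 c d).indicator F) ((a * c, -(a * d)) : ℝ × ℝ)]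
  congr 1; ext x
  have : x ∈ low2 c d ↔ x - (a * c, -(a * d)) ∈ low2 c d := by
    simp only [low2, mem_ofPred_eq, Prod.fst_sub, Prod.snd_sub]
    rw [show d * (x.1 - a * c) + c * (x.2 - -(a * d)) = d * x.1 + c * x.2 by ring]
  by_cases hx : x ∈ low2 c d
  · rw [indicator_of_mem hx, indicator_of_mem (this.1 hx)]
  · rw [indicator_of_notMem hx, indicator_of_notMem (fun h => hx (this.2 h))]

lemma line_null {c : ℝ} (d : ℝ) (hc : c ≠ 0) :
    (volume : Measure (ℝ × ℝ)) {x | d * x.1 + c * x.2 = 0} = 0 := by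
  let L : (ℝ × ℝ) →ₗ[ℝ] ℝ := d • LinearMap.fst ℝ ℝ ℝ + c • LinearMap.snd ℝ ℝ ℝ
  have := Measure.addHaar_submodule (volume : Measure (ℝ × ℝ)) (LinearMap.ker L) (by
    intro h
    have : ((0, 1) : ℝ × ℝ) ∈ LinearMap.ker L := by rw [h]; trivial
    simp [L] at this
    exact hc this)
  convert! this using 2

lemma sector_mem {α c d : ℝ} (hc : 0 < c) (ht : Real.tan (α / 2) = d / c) (x : ℝ × ℝ) :
    x ∈ sector α ↔ 0 ≤ d * x.1 + c * x.2 ∧ 0 ≤ d * x.1 - c * x.2 := by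
  simp only [sector, mem_ofPred_eq, ht]
  rw [← mul_div_assoc, abs_le, le_div_iff₀ hc, ← neg_div, div_le_iff₀ hc]
  constructor <;> rintro ⟨h1, h2⟩ <;> constructor <;> linarith

lemma sector_integral {α c d : ℝ} (hc : 0 < c) (ht : Real.tan (α / 2) = d / c)
    (F : ℝ × ℝ → ℝ) (hF : ∀ x : ℝ × ℝ, d * x.1 - c * x.2 ≤ 0 → x ∈ low2 c d → F x = 0) :
    ∫ x in sector α, F x = ∫ x in low2 c d, F x := by
  have hm : MeasurableSet (sector α) := by
    unfold sector
    exact measurableSet_le (by fun_prop) (by fun_prop)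
  rw [← integral_indicator hm, ← integral_indicator (low2_meas c d)]
  apply integral_congr_ae
  have hn : ∀ᵐ x : ℝ × ℝ, ¬ (d * x.1 + c * x.2 = 0) := by
    rw [ae_iff]; simpa using line_null d hc.ne'
  filter_upwards [hn] with x hx
  by_cases h1 : x ∈ low2 c d
  · rw [indicator_of_mem h1]
    by_cases h2 : x ∈ sector α
    · rw [indicator_of_mem h2]
    · rw [indicator_of_notMem h2]
      rw [sector_mem hc ht] at h2
      have h3 : 0 < d * x.1 + c * x.2 := h1
      refine (hF x ?_ h1).symm
      by_contra h4
      exact h2 ⟨h3.le, by linarith⟩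
  · rw [indicator_of_notMem h1]
    apply indicator_of_notMem
    rw [sector_mem hc ht]
    rintro ⟨h2, -⟩
    exact h1 (lt_of_le_of_ne h2 (Ne.symm hx))

lemma sector_le_low2 {α c d : ℝ} (hc : 0 < c) (ht : Real.tan (α / 2) = d / c) {K τ0 sg b3 : ℝ}
    (hd : 0 < d) (hsg : 0 < sg) {v : ℝ × ℝ → ℂ} (hv : ContDiff ℝ (⊤ : ℕ∞) v)
    (hvc : HasCompactSupport v)
    (hlt : ∫ x in low2 c d, dens2 (sg * c) (sg * d) b3 τ0 v x < K * ∫ x in low2 c d, ‖v x‖ ^ 2) :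
    ∀ᶠ τ in atTop, ∃ u : ℝ × ℝ → ℂ, ContDiff ℝ (⊤ : ℕ∞) u ∧ HasCompactSupport u ∧
      ∫ x in sector α, dens2 (sg * c) (sg * d) b3 τ u x < K * ∫ x in sector α, ‖u x‖ ^ 2 := by
  obtain ⟨M, hM⟩ : ∃ M : ℝ, ∀ y ∈ tsupport v, -M ≤ d * y.1 - c * y.2 := by
    obtain ⟨M, hM⟩ := (hvc.image (f := fun y : ℝ × ℝ => -(d * y.1 - c * y.2))
      (by fun_prop)).bddAbove
    exact ⟨M, fun y hy => by have := hM (mem_image_of_mem _ hy); linarith⟩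
  have hcd : 0 < 2 * c * d := by positivity
  have hS : 0 < sg * (2 * c * d) := by positivity
  filter_upwards [eventually_gt_atTop (τ0 + sg * M)] with τ hτ
  set a := (τ - τ0) / (sg * (2 * c * d)) with ha
  have hτ' : τ = τ0 + a * (sg * (2 * c * d)) := by rw [ha]; field_simp; ring
  have haM : M < a * (2 * c * d) := by
    have : sg * M < sg * (a * (2 * c * d)) := by
      rw [hτ'] at hτ; linarith
    exact lt_of_mul_lt_mul_left this hsg.le
  have hnot : ∀ x : ℝ × ℝ, d * x.1 - c * x.2 ≤ 0 → x - (a * c, -(a * d)) ∉ tsupport v := by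
    intro x hx hy
    have := hM _ hy
    simp only [Prod.fst_sub, Prod.snd_sub] at this
    linarith
  refine ⟨mtr b3 c d a v, mtr_cd _ _ _ _ hv, mtr_cc _ _ _ _ hvc, ?_⟩
  rw [hτ']
  simp only [mtr_dens _ _ _ _ _ _ hv, mtr_norm]
  rw [sector_integral hc ht _ (fun x hx _ => dens2_zero _ _ _ _ (hnot x hx)),
    sector_integral hc ht _ (fun x hx _ => by
      rw [image_eq_zero_of_notMem_tsupport (hnot x hx)]; simp),
    low2_trans c d a (dens2 (sg * c) (sg * d) b3 τ0 v), low2_trans c d a (fun x => ‖v x‖ ^ 2)]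
  exact hlt

lemma realmul_fderiv {g : ℝ × ℝ → ℝ} {u : ℝ × ℝ → ℂ} {x : ℝ × ℝ}
    (hg : DifferentiableAt ℝ g x) (hu : DifferentiableAt ℝ u x) (e : ℝ × ℝ) :
    fderiv ℝ (fun x => ((g x : ℝ) : ℂ) * u x) x e =
      ((g x : ℝ) : ℂ) * fderiv ℝ u x e + ((fderiv ℝ g x e : ℝ) : ℂ) * u x := by
  have h0 : DifferentiableAt ℝ (fun x => ((g x : ℝ) : ℂ)) x :=
    Complex.ofRealCLM.differentiableAt.comp x hg
  apply line_deriv (h0.mul hu)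
  have hb := (line_hasDeriv hg e).ofReal_comp.mul (line_hasDeriv hu e)
  refine hb.congr_deriv ?_
  simp
  ring

/-- IMS localization, pointwise. -/
lemma ims_dens (b1 b2 b3 τ : ℝ) {f : ℝ × ℝ → ℝ} (hf : ContDiff ℝ (⊤ : ℕ∞) f)
    {u : ℝ × ℝ → ℂ} (hu : ContDiff ℝ (⊤ : ℕ∞) u) (x : ℝ × ℝ) :
    dens2 b1 b2 b3 τ (fun x => ((Real.cos (f x) : ℝ) : ℂ) * u x) x
      + dens2 b1 b2 b3 τ (fun x => ((Real.sin (f x) : ℝ) : ℂ) * u x) x =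
    dens2 b1 b2 b3 τ u x
      + ((fderiv ℝ f x (1, 0)) ^ 2 + (fderiv ℝ f x (0, 1)) ^ 2) * ‖u x‖ ^ 2 := by
  have df := hf.differentiable (by simp) x
  have du := hu.differentiable (by simp) x
  have dc : ∀ e, fderiv ℝ (fun x => Real.cos (f x)) x e = -Real.sin (f x) * fderiv ℝ f x e := by
    intro e
    rw [fderiv_cos df]; simp
  have ds : ∀ e, fderiv ℝ (fun x => Real.sin (f x)) x e = Real.cos (f x) * fderiv ℝ f x e := by
    intro e
    rw [fderiv_sin df]; simp
  unfold dens2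
  simp only [realmul_fderiv df.cos du, realmul_fderiv df.sin du, dc, ds]
  set p := Real.cos (f x)
  set q := Real.sin (f x)
  set A := -Complex.I * fderiv ℝ u x (1, 0) + ((x.2 * b3 : ℝ) : ℂ) * u x with hA
  set D := fderiv ℝ u x (0, 1)
  set f1 := fderiv ℝ f x (1, 0)
  set f2 := fderiv ℝ f x (0, 1)
  have h' : p ^ 2 + q ^ 2 = 1 := Real.cos_sq_add_sin_sq _
  have h'' : p ^ 2 + (-q) ^ 2 = 1 := by rw [neg_sq]; exact h'
  have r1 := rot_norm h'' A (-Complex.I * f1 * u x)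
  have r2 := rot_norm h'' D (f2 * u x)
  have r3 : ‖((p : ℝ) : ℂ) * u x‖ ^ 2 + ‖((q : ℝ) : ℂ) * u x‖ ^ 2 = ‖u x‖ ^ 2 := by
    simp only [norm_mul, Complex.norm_real, mul_pow, Real.norm_eq_abs, sq_abs]
    linear_combination ‖u x‖ ^ 2 * h'
  have n1 : ‖-Complex.I * f1 * u x‖ ^ 2 = f1 ^ 2 * ‖u x‖ ^ 2 := by
    simp [mul_pow]
  have n2 : ‖(f2 : ℂ) * u x‖ ^ 2 = f2 ^ 2 * ‖u x‖ ^ 2 := by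
    simp [mul_pow]
  have e1 : -Complex.I * ((p : ℂ) * fderiv ℝ u x (1, 0) + ((-q * f1 : ℝ) : ℂ) * u x)
      + ((x.2 * b3 : ℝ) : ℂ) * ((p : ℂ) * u x) = p * A + ((-q : ℝ) : ℂ) * (-Complex.I * f1 * u x) := by
    rw [hA]; push_cast; ring
  have e2 : -Complex.I * ((q : ℂ) * fderiv ℝ u x (1, 0) + ((p * f1 : ℝ) : ℂ) * u x)
      + ((x.2 * b3 : ℝ) : ℂ) * ((q : ℂ) * u x) = -((-q : ℝ) : ℂ) * A + p * (-Complex.I * f1 * u x) := by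
    rw [hA]; push_cast; ring
  have e3 : (p : ℂ) * D + ((-q * f2 : ℝ) : ℂ) * u x = p * D + ((-q : ℝ) : ℂ) * (f2 * u x) := by
    push_cast; ring
  have e4 : (q : ℂ) * D + ((p * f2 : ℝ) : ℂ) * u x = -((-q : ℝ) : ℂ) * D + p * (f2 * u x) := by
    push_cast; ring
  rw [e1, e2, e3, e4]
  rw [n1] at r1
  rw [n2] at r2
  linear_combination r1 + r2 + (x.1 * b2 - x.2 * b1 - τ) ^ 2 * r3

lemma st_deriv_bdd : ∃ M : ℝ, ∀ t, |deriv Real.smoothTransition t| ≤ M := by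
  have hc : Continuous (deriv Real.smoothTransition) :=
    (Real.smoothTransition.contDiff (n := 1)).continuous_deriv (by simp)
  obtain ⟨M, hM⟩ := (isCompact_Icc (a := (-1 : ℝ)) (b := 2)).exists_bound_of_continuousOn
    hc.continuousOn
  refine ⟨max M 0, fun t => ?_⟩
  by_cases ht : t ∈ Icc (-1 : ℝ) 2
  · exact (hM t ht).trans (le_max_left _ _)
  · have h0 : deriv Real.smoothTransition t = 0 := by
      rw [mem_Icc, not_and_or] at ht
      rcases ht with ht | ht
      · have : Real.smoothTransition =ᶠ[nhds t] fun _ => 0 := by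
          filter_upwards [Iio_mem_nhds (show t < 0 by linarith)] with s hs
          exact Real.smoothTransition.zero_of_nonpos (le_of_lt hs)
        rw [this.deriv_eq]; simp
      · have : Real.smoothTransition =ᶠ[nhds t] fun _ => 1 := by
          filter_upwards [Ioi_mem_nhds (show 1 < t by linarith)] with s hs
          exact Real.smoothTransition.one_of_one_le (le_of_lt hs)
        rw [this.deriv_eq]; simp
    rw [h0]; simp

/-- The cut-off angle. -/
def cut (c d k : ℝ) (x : ℝ × ℝ) : ℝ :=
  π / 2 * Real.smoothTransition (k * (d * x.1 - c * x.2) - 1)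

lemma cut_cd (c d k : ℝ) : ContDiff ℝ (⊤ : ℕ∞) (cut c d k) := by
  unfold cut
  refine contDiff_const.mul (Real.smoothTransition.contDiff.comp ?_)
  fun_prop

lemma cut_fderiv (c d k : ℝ) (x e : ℝ × ℝ) : fderiv ℝ (cut c d k) x e =
    π / 2 * (deriv Real.smoothTransition (k * (d * x.1 - c * x.2) - 1)
      * (k * (d * e.1 - c * e.2))) := by
  apply line_deriv ((cut_cd c d k).differentiable (by simp) x)
  have h1 : HasDerivAt (fun t : ℝ => k * (d * (x + t • e).1 - c * (x + t • e).2) - 1)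
      (k * (d * e.1 - c * e.2)) 0 := by
    have : (fun t : ℝ => k * (d * (x + t • e).1 - c * (x + t • e).2) - 1) = fun t =>
        (k * (d * e.1 - c * e.2)) * t + (k * (d * x.1 - c * x.2) - 1) := by
      ext t; simp; ring
    rw [this]
    simpa using ((hasDerivAt_id (0 : ℝ)).const_mul (k * (d * e.1 - c * e.2))).add_const
      (k * (d * x.1 - c * x.2) - 1)
  have hs : HasDerivAt Real.smoothTransition
      (deriv Real.smoothTransition (k * (d * x.1 - c * x.2) - 1))
      (k * (d * (x + (0 : ℝ) • e).1 - c * (x + (0 : ℝ) • e).2) - 1) := by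
    simp only [zero_smul, add_zero]
    exact ((Real.smoothTransition.contDiff (n := 1)).differentiable (by simp) _).hasDerivAt
  exact (hs.comp (0 : ℝ) h1).const_mul (π / 2)

lemma lower_sector {α c d : ℝ} (hc : 0 < c) (hcd : c ^ 2 + d ^ 2 = 1)
    (ht : Real.tan (α / 2) = d / c)
    {K sg b3 M : ℝ} (hsg : 0 < sg)
    (hM : ∀ t, |deriv Real.smoothTransition t| ≤ M)
    (hK : ∀ (τ : ℝ) (v : ℝ × ℝ → ℂ), ContDiff ℝ (⊤ : ℕ∞) v → HasCompactSupport v →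
      K * ∫ x in low2 c d, ‖v x‖ ^ 2 ≤ ∫ x in low2 c d, dens2 (sg * c) (sg * d) b3 τ v x)
    {τ : ℝ} (hτ : 0 < τ) (hτK : K ≤ τ ^ 2 / 4)
    {u : ℝ × ℝ → ℂ} (hu : ContDiff ℝ (⊤ : ℕ∞) u) (huc : HasCompactSupport u) :
    (K - (2 * π * sg * M) ^ 2 / τ ^ 2) * ∫ x in sector α, ‖u x‖ ^ 2 ≤
      ∫ x in sector α, dens2 (sg * c) (sg * d) b3 τ u x := by
  set k := 4 * sg / τ with hk
  have hkp : 0 < k := by positivity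
  set f := cut c d k with hf
  have hfc : ContDiff ℝ (⊤ : ℕ∞) f := cut_cd c d k
  set u1 := fun x => ((Real.cos (f x) : ℝ) : ℂ) * u x with hu1
  set u2 := fun x => ((Real.sin (f x) : ℝ) : ℂ) * u x with hu2
  have c1 : ContDiff ℝ (⊤ : ℕ∞) u1 :=
    (Complex.ofRealCLM.contDiff.comp (Real.contDiff_cos.comp hfc)).mul hu
  have c2 : ContDiff ℝ (⊤ : ℕ∞) u2 :=
    (Complex.ofRealCLM.contDiff.comp (Real.contDiff_sin.comp hfc)).mul hu
  have s1 : HasCompactSupport u1 := huc.mul_left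
  have s2 : HasCompactSupport u2 := huc.mul_left
  have hgrad : ∀ x, (fderiv ℝ f x (1, 0)) ^ 2 + (fderiv ℝ f x (0, 1)) ^ 2 ≤
      (2 * π * sg * M) ^ 2 / τ ^ 2 := by
    intro x
    rw [hf, cut_fderiv, cut_fderiv]
    set D := deriv Real.smoothTransition (k * (d * x.1 - c * x.2) - 1)
    have hD : D ^ 2 ≤ M ^ 2 := sq_le_sq' (abs_le.1 (hM _)).1 (abs_le.1 (hM _)).2
    have : (π / 2 * (D * (k * (d * 1 - c * 0)))) ^ 2 + (π / 2 * (D * (k * (d * 0 - c * 1)))) ^ 2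
        = (2 * π * sg) ^ 2 / τ ^ 2 * D ^ 2 := by
      rw [hk]; field_simp
      linear_combination 16 * D ^ 2 * hcd
    calc _ = _ := this
      _ ≤ (2 * π * sg) ^ 2 / τ ^ 2 * M ^ 2 := by gcongr
      _ = _ := by ring
  have hp1 : ∀ x, K * ‖u1 x‖ ^ 2 ≤ dens2 (sg * c) (sg * d) b3 τ u1 x := by
    intro x
    by_cases hx : 2 ≤ k * (d * x.1 - c * x.2)
    · have : u1 x = 0 := by
        simp only [hu1, hf, cut]
        rw [Real.smoothTransition.one_of_one_le (by linarith)]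
        simp
      rw [this]
      simpa using dens2_nonneg _ _ _ _ _ _
    · push Not at hx
      have h2 : sg * (d * x.1 - c * x.2) ≤ τ / 2 := by
        rw [hk, div_mul_eq_mul_div, div_lt_iff₀ hτ] at hx
        linarith
      have h3 : τ ^ 2 / 4 ≤ (x.1 * (sg * d) - x.2 * (sg * c) - τ) ^ 2 := by
        nlinarith
      have h4 : K * ‖u1 x‖ ^ 2 ≤ (x.1 * (sg * d) - x.2 * (sg * c) - τ) ^ 2 * ‖u1 x‖ ^ 2 := by
        gcongr; linarith
      refine h4.trans ?_
      unfold dens2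
      have : 0 ≤ ‖(-Complex.I) * fderiv ℝ u1 x (1, 0) + ((x.2 * b3 : ℝ) : ℂ) * u1 x‖ ^ 2
        + ‖fderiv ℝ u1 x (0, 1)‖ ^ 2 := by positivity
      linarith
  have hu20 : ∀ x : ℝ × ℝ, d * x.1 - c * x.2 ≤ 0 → u2 =ᶠ[nhds x] fun _ => 0 := by
    intro x hx
    have hopen : IsOpen {y : ℝ × ℝ | k * (d * y.1 - c * y.2) < 1} :=
      isOpen_lt (by fun_prop) (by fun_prop)
    have hmem : x ∈ {y : ℝ × ℝ | k * (d * y.1 - c * y.2) < 1} := by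
      change k * (d * x.1 - c * x.2) < 1; nlinarith
    filter_upwards [hopen.mem_nhds hmem] with y hy
    replace hy : k * (d * y.1 - c * y.2) < 1 := hy
    simp only [hu2, hf, cut]
    rw [Real.smoothTransition.zero_of_nonpos (by linarith)]
    simp
  have hi0 := (sq_integrable (μ := (volume : Measure (ℝ × ℝ))) hu.continuous huc).integrableOn
    (s := sector α)
  have hi1 := (sq_integrable (μ := (volume : Measure (ℝ × ℝ))) c1.continuous s1).integrableOn
    (s := sector α)
  have hi2 := (sq_integrable (μ := (volume : Measure (ℝ × ℝ))) c2.continuous s2).integrableOn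
    (s := sector α)
  have hd0 := (dens2_integrable (sg * c) (sg * d) b3 τ hu huc).integrableOn (s := sector α)
  have hd1 := (dens2_integrable (sg * c) (sg * d) b3 τ c1 s1).integrableOn (s := sector α)
  have hd2 := (dens2_integrable (sg * c) (sg * d) b3 τ c2 s2).integrableOn (s := sector α)
  have I1 : K * ∫ x in sector α, ‖u1 x‖ ^ 2 ≤
      ∫ x in sector α, dens2 (sg * c) (sg * d) b3 τ u1 x := by
    rw [← integral_const_mul]
    exact integral_mono (hi1.const_mul K) hd1 hp1
  have I2 : K * ∫ x in sector α, ‖u2 x‖ ^ 2 ≤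
      ∫ x in sector α, dens2 (sg * c) (sg * d) b3 τ u2 x := by
    rw [sector_integral hc ht _ (fun x hx _ => by
        rw [(hu20 x hx).eq_of_nhds]; simp : ∀ x : ℝ × ℝ, d * x.1 - c * x.2 ≤ 0 →
          x ∈ low2 c d → ‖u2 x‖ ^ 2 = 0),
      sector_integral hc ht _ (fun x hx _ => by
        unfold dens2
        rw [(hu20 x hx).fderiv_eq, (hu20 x hx).eq_of_nhds]; simp : ∀ x : ℝ × ℝ,
          d * x.1 - c * x.2 ≤ 0 → x ∈ low2 c d → dens2 (sg * c) (sg * d) b3 τ u2 x = 0)]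
    exact hK τ u2 c2 s2
  have hN : (∫ x in sector α, ‖u1 x‖ ^ 2) + (∫ x in sector α, ‖u2 x‖ ^ 2) =
      ∫ x in sector α, ‖u x‖ ^ 2 := by
    rw [← integral_add hi1 hi2]
    congr 1; ext x
    simp only [hu1, hu2, norm_mul, Complex.norm_real, mul_pow, Real.norm_eq_abs, sq_abs]
    linear_combination ‖u x‖ ^ 2 * Real.cos_sq_add_sin_sq (f x)
  have hE : (∫ x in sector α, dens2 (sg * c) (sg * d) b3 τ u1 x)
      + (∫ x in sector α, dens2 (sg * c) (sg * d) b3 τ u2 x) ≤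
      (∫ x in sector α, dens2 (sg * c) (sg * d) b3 τ u x)
       + (2 * π * sg * M) ^ 2 / τ ^ 2 * ∫ x in sector α, ‖u x‖ ^ 2 := by
    rw [← integral_add hd1 hd2, ← integral_const_mul, ← integral_add hd0 (hi0.const_mul _)]
    refine integral_mono (hd1.add hd2) (hd0.add (hi0.const_mul _)) ?_
    intro x
    have := ims_dens (sg * c) (sg * d) b3 τ hfc hu x
    have h2 := mul_le_mul_of_nonneg_right (hgrad x) (sq_nonneg ‖u x‖)
    simp only [hu1, hu2]
    linarith
  rw [sub_mul, ← hN, mul_add]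
  rw [← hN] at hE
  linarith

lemma densS_nonneg (C S : ℝ) (u : ℝ × ℝ × ℝ → ℂ) (x : ℝ × ℝ × ℝ) : 0 ≤ densS C S u x := by
  unfold densS; positivity

/-- The set of Rayleigh quotients for the half-space. -/
def sSet (C S : ℝ) : Set ℝ :=
  { r : ℝ | ∃ u : ℝ × ℝ × ℝ → ℂ, ContDiff ℝ (⊤ : ℕ∞) u ∧ HasCompactSupport u ∧
    (0 < ∫ x in halfSpace3, ‖u x‖ ^ 2) ∧
    r = (∫ x in halfSpace3, densS C S u x) / (∫ x in halfSpace3, ‖u x‖ ^ 2) }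

/-- The set of Rayleigh quotients for the sector. -/
def bSet (α b1 b2 b3 τ : ℝ) : Set ℝ :=
  { r : ℝ | ∃ u : ℝ × ℝ → ℂ, ContDiff ℝ (⊤ : ℕ∞) u ∧ HasCompactSupport u ∧
    (0 < ∫ x in sector α, ‖u x‖ ^ 2) ∧
    r = (∫ x in sector α, dens2 b1 b2 b3 τ u x) / (∫ x in sector α, ‖u x‖ ^ 2) }

lemma sigmaHS_eq (θ : ℝ) : sigmaHS θ = sInf (sSet (Real.cos θ) (Real.sin θ)) := rfl

lemma bandFn_eq (α b1 b2 b3 τ : ℝ) : bandFn α b1 b2 b3 τ = sInf (bSet α b1 b2 b3 τ) := rfl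

lemma sSet_bdd (C S : ℝ) : BddBelow (sSet C S) := by
  refine ⟨0, ?_⟩
  rintro r ⟨u, -, -, h, rfl⟩
  exact div_nonneg (integral_nonneg fun _ => densS_nonneg _ _ _ _) h.le

lemma bSet_bdd (α b1 b2 b3 τ : ℝ) : BddBelow (bSet α b1 b2 b3 τ) := by
  refine ⟨0, ?_⟩
  rintro r ⟨u, -, -, h, rfl⟩
  exact div_nonneg (integral_nonneg fun _ => dens2_nonneg _ _ _ _ _ _) h.le

lemma sSet_nonempty (C S : ℝ) : (sSet C S).Nonempty := by
  let χ : ContDiffBump ((0, 1, 0) : ℝ × ℝ × ℝ) := ⟨1, 2, one_pos, one_lt_two⟩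
  have h1 : ContDiff ℝ (⊤ : ℕ∞) fun x => ((χ x : ℝ) : ℂ) :=
    Complex.ofRealCLM.contDiff.comp χ.contDiff
  have h2 : HasCompactSupport fun x => ((χ x : ℝ) : ℂ) :=
    HasCompactSupport.intro χ.hasCompactSupport fun x hx => by
      simp [image_eq_zero_of_notMem_tsupport hx]
  have hop : IsOpen halfSpace3 := isOpen_lt (by fun_prop) (by fun_prop)
  refine ⟨_, fun x => ((χ x : ℝ) : ℂ), h1, h2, ?_, rfl⟩
  rw [setIntegral_pos_iff_support_of_nonneg_ae (Eventually.of_forall fun _ => by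
    simp only [Pi.zero_apply]; positivity)
    (sq_integrable h1.continuous h2).integrableOn]
  have hsub : Metric.ball ((0, 1, 0) : ℝ × ℝ × ℝ) 2 ∩ halfSpace3 ⊆
      (Function.support fun x => ‖((χ x : ℝ) : ℂ)‖ ^ 2) ∩ halfSpace3 := by
    refine inter_subset_inter_left _ fun x hx => ?_
    have := χ.pos_of_mem_ball hx
    simp [this.ne']
  refine lt_of_lt_of_le ?_ (measure_mono hsub)
  refine (Metric.isOpen_ball.inter hop).measure_pos _ ⟨(0, 1, 0), ?_, ?_⟩
  · simp
  · change (0 : ℝ) < 1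
    norm_num

lemma main_limit {α c d p q sg b3 C S : ℝ} (hc : 0 < c) (hd : 0 < d) (hsg : 0 < sg)
    (h : c ^ 2 + d ^ 2 = 1) (h' : p ^ 2 + q ^ 2 = 1)
    (h3 : b3 = C * q) (hC : sg * (c ^ 2 - d ^ 2) = C * p) (hS : S = sg * (2 * c * d))
    (ht : Real.tan (α / 2) = d / c) :
    Tendsto (fun τ => sInf (bSet α (sg * c) (sg * d) b3 τ)) atTop (nhds (sInf (sSet C S))) := by
  set K := sInf (sSet C S) with hKdef
  have hK3 : ∀ W : ℝ × ℝ × ℝ → ℂ, ContDiff ℝ (⊤ : ℕ∞) W → HasCompactSupport W →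
      K * ∫ x in low3 c d, ‖W x‖ ^ 2 ≤ ∫ x in low3 c d, dens3 (sg * c) (sg * d) b3 W x := by
    intro W hW hWc
    rw [← transfer_norm b3 S h h' W, ← transfer_fwd h h' h3 hC hS hW]
    have h0 : 0 ≤ ∫ x in halfSpace3, ‖gT b3 S c d p q W x‖ ^ 2 :=
      integral_nonneg fun _ => by positivity
    rcases h0.eq_or_lt with h0 | h0
    · rw [← h0, mul_zero]
      exact integral_nonneg fun _ => densS_nonneg _ _ _ _
    · rw [← le_div_iff₀ h0]
      exact csInf_le (sSet_bdd C S) ⟨_, gT_contDiff b3 S c d p q hW, gT_compact b3 S h h' hWc,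
        h0, rfl⟩
  have hK2 : ∀ (τ : ℝ) (v : ℝ × ℝ → ℂ), ContDiff ℝ (⊤ : ℕ∞) v → HasCompactSupport v →
      K * ∫ x in low2 c d, ‖v x‖ ^ 2 ≤ ∫ x in low2 c d, dens2 (sg * c) (sg * d) b3 τ v x :=
    fun τ v hv hvc => lower_2D _ _ _ _ _ _ _ hK3 hv hvc
  obtain ⟨M, hM⟩ := st_deriv_bdd
  have hup : ∀ ε > 0, ∀ᶠ τ in atTop, ∃ r ∈ bSet α (sg * c) (sg * d) b3 τ, r < K + ε := by
    intro ε hε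
    obtain ⟨r, ⟨w, hw, hwc, hwp, rfl⟩, hr⟩ := exists_lt_of_csInf_lt (sSet_nonempty C S)
      (show sInf (sSet C S) < K + ε by linarith)
    rw [div_lt_iff₀ hwp] at hr
    obtain ⟨W, hW, hWc, rfl⟩ := gT_surj b3 S h h' hw hwc
    rw [transfer_norm b3 S h h' W, transfer_fwd h h' h3 hC hS hW] at hr
    obtain ⟨τ0, v, hv, hvc, hlt⟩ := exists_fibre _ _ _ _ _ _ hW hWc hr
    filter_upwards [sector_le_low2 hc ht hd hsg hv hvc hlt] with τ hτ
    obtain ⟨u, hu, huc, hl⟩ := hτ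
    have hE : 0 ≤ ∫ x in sector α, dens2 (sg * c) (sg * d) b3 τ u x :=
      integral_nonneg fun _ => dens2_nonneg _ _ _ _ _ _
    have hN : 0 ≤ ∫ x in sector α, ‖u x‖ ^ 2 := integral_nonneg fun _ => by positivity
    have hN' : 0 < ∫ x in sector α, ‖u x‖ ^ 2 := by
      rcases hN.eq_or_lt with h0 | h0
      · rw [← h0, mul_zero] at hl; linarith
      · exact h0
    exact ⟨_, ⟨u, hu, huc, hN', rfl⟩, by rwa [div_lt_iff₀ hN']⟩
  have hlim : Tendsto (fun τ : ℝ => (2 * π * sg * M) ^ 2 / τ ^ 2) atTop (nhds 0) :=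
    tendsto_const_nhds.div_atTop (tendsto_pow_atTop (by norm_num))
  rw [Metric.tendsto_nhds]
  intro ε hε
  have hbig : ∀ᶠ τ : ℝ in atTop, K ≤ τ ^ 2 / 4 :=
    (((tendsto_pow_atTop (α := ℝ) (n := 2) (by norm_num)).atTop_div_const
      (by norm_num : (0 : ℝ) < 4))).eventually_ge_atTop K
  filter_upwards [hup ε hε, eventually_gt_atTop 0, hbig, hlim.eventually_lt_const hε]
    with τ hτ h0 hb hl
  obtain ⟨r, hr, hrlt⟩ := hτ
  have up : sInf (bSet α (sg * c) (sg * d) b3 τ) ≤ r := csInf_le (bSet_bdd _ _ _ _ _) hr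
  have lo : K - (2 * π * sg * M) ^ 2 / τ ^ 2 ≤ sInf (bSet α (sg * c) (sg * d) b3 τ) := by
    apply le_csInf ⟨r, hr⟩
    rintro s ⟨u, hu, huc, hN, rfl⟩
    rw [le_div_iff₀ hN]
    exact lower_sector hc h ht hsg hM hK2 h0 hb hu huc
  rw [Real.dist_eq, abs_lt]
  constructor <;> linarith

end MagWedge

open MagWedge in
/-- `lim_{τ→+∞} s(B;α,τ) = σ(arcsin(sin α · sin γ))`. -/
theorem bandFn_tendsto_sigma (α γ : ℝ) (hα : α ∈ Set.Ioo 0 π) (hγ : γ ∈ Set.Ioc 0 (π / 2)) :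
    Filter.Tendsto
      (fun τ : ℝ => bandFn α
        (Real.sin γ * Real.cos (α / 2)) (Real.sin γ * Real.sin (α / 2)) (Real.cos γ) τ)
      Filter.atTop (nhds (sigmaHS (Real.arcsin (Real.sin α * Real.sin γ)))) := by
  obtain ⟨ha0, haπ⟩ := hα
  obtain ⟨hg0, hgπ⟩ := hγ
  have hc : 0 < Real.cos (α / 2) := Real.cos_pos_of_mem_Ioo ⟨by linarith, by linarith⟩
  have hd : 0 < Real.sin (α / 2) := Real.sin_pos_of_pos_of_lt_pi (by linarith) (by linarith)
  have hsg : 0 < Real.sin γ := Real.sin_pos_of_pos_of_lt_pi hg0 (by linarith)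
  have h : Real.cos (α / 2) ^ 2 + Real.sin (α / 2) ^ 2 = 1 := Real.cos_sq_add_sin_sq _
  have hsin : Real.sin α = 2 * Real.sin (α / 2) * Real.cos (α / 2) := by
    rw [← Real.sin_two_mul]; congr 1; ring
  have hγ2 := Real.sin_sq_add_cos_sq γ
  set c := Real.cos (α / 2)
  set d := Real.sin (α / 2)
  set sg := Real.sin γ
  set b3 := Real.cos γ
  set S := Real.sin α * sg with hSdef
  have hS : S = sg * (2 * c * d) := by rw [hSdef, hsin]; ring
  have hsum : (sg * (c ^ 2 - d ^ 2)) ^ 2 + b3 ^ 2 = 1 - S ^ 2 := by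
    rw [hS]
    linear_combination hγ2 + sg ^ 2 * (c ^ 2 + d ^ 2 + 1) * h
  have hS1 : S ^ 2 ≤ 1 := by nlinarith [sq_nonneg (sg * (c ^ 2 - d ^ 2)), sq_nonneg b3]
  have hSb := abs_le.1 ((sq_le_one_iff_abs_le_one S).1 hS1)
  have hsinθ : Real.sin (Real.arcsin S) = S := Real.sin_arcsin hSb.1 hSb.2
  set C := Real.cos (Real.arcsin S) with hCdef
  have hC2 : C ^ 2 = (sg * (c ^ 2 - d ^ 2)) ^ 2 + b3 ^ 2 := by
    have := Real.sin_sq_add_cos_sq (Real.arcsin S)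
    rw [hsinθ] at this
    linarith
  obtain ⟨p, q, h', h3, hC⟩ : ∃ p q : ℝ, p ^ 2 + q ^ 2 = 1 ∧ b3 = C * q ∧
      sg * (c ^ 2 - d ^ 2) = C * p := by
    by_cases hC0 : C = 0
    · rw [hC0] at hC2
      refine ⟨1, 0, by norm_num, ?_, ?_⟩
      · have : b3 ^ 2 = 0 := by nlinarith [sq_nonneg (sg * (c ^ 2 - d ^ 2)), sq_nonneg b3]
        rw [pow_eq_zero_iff (by norm_num)] at this
        rw [this]; ring
      · have : (sg * (c ^ 2 - d ^ 2)) ^ 2 = 0 := by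
          nlinarith [sq_nonneg (sg * (c ^ 2 - d ^ 2)), sq_nonneg b3]
        rw [pow_eq_zero_iff (by norm_num)] at this
        rw [this, hC0]; ring
    · refine ⟨sg * (c ^ 2 - d ^ 2) / C, b3 / C, ?_, ?_, ?_⟩
      · rw [div_pow, div_pow, ← add_div, ← hC2]
        exact div_self (pow_ne_zero 2 hC0)
      · field_simp
      · field_simp
  have ht : Real.tan (α / 2) = d / c := Real.tan_eq_sin_div_cos _
  have key := main_limit hc hd hsg h h' h3 hC hS ht
  rw [sigmaHS_eq, hsinθ]
  exact key
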